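/- arXiv:2204.13000 — 2 statements merged into one kernel-verified Lean document; each statement's English description precedes it below -/
import Mathlib

section
/- There exist a dendrite D and a continuous map f : D → D such that: (1) f has zero topological entropy; (2) every point of D is periodic or eventually periodic under f; (3) the non-wandering set of f equals the set of periodic points, Ω(f) = P(f); (4) h_∞(f|_{Ω(f)}) > 0 (in particular h_∞(f) > 0); and (5) f has no Li–Yorke pair, so f is not Li–Yorke chaotic. -/
open Set Filter Topology Function
open scoped ENNReal

/-- A subset of a topological space is an *arc* if it is homeomorphic to `[0,1]`. -/
def IsArc {X : Type*} [TopologicalSpace X] (A : Set X) : Prop :=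
  Nonempty (A ≃ₜ Set.Icc (0 : ℝ) 1)

/-- A point `p` is an *endpoint* of the arc `A` if `p ∈ A` and `A \ {p}` is connected. -/
def IsArcEndpoint {X : Type*} [TopologicalSpace X] (A : Set X) (p : X) : Prop :=
  p ∈ A ∧ IsConnected (A \ {p})

/-- A subset is a *simple closed curve* if it is homeomorphic to the unit circle. -/
def IsSimpleClosedCurve {X : Type*} [TopologicalSpace X] (S : Set X) : Prop :=
  Nonempty (S ≃ₜ Metric.sphere (0 : ℂ) 1)

/-- A *tree* is a compact connected metric space which is a union of finitely many arcs,
any two of which are disjoint or intersect only in (one or both of) their endpoints,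
and which contains no simple closed curve. -/
def IsTree (X : Type*) [MetricSpace X] : Prop :=
  CompactSpace X ∧ ConnectedSpace X ∧
    (∃ 𝒜 : Finset (Set X), (∀ A ∈ 𝒜, IsArc A) ∧ ⋃₀ (𝒜 : Set (Set X)) = Set.univ ∧
      ∀ A ∈ 𝒜, ∀ B ∈ 𝒜, A ≠ B → ∀ p ∈ A ∩ B, IsArcEndpoint A p ∧ IsArcEndpoint B p) ∧
    ∀ S : Set X, ¬ IsSimpleClosedCurve S

/-- A *dendrite* is a locally connected continuum containing no simple closed curve. -/
def IsDendrite (X : Type*) [MetricSpace X] : Prop :=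
  CompactSpace X ∧ ConnectedSpace X ∧ LocallyConnectedSpace X ∧
    ∀ S : Set X, ¬ IsSimpleClosedCurve S

/-- `𝒰` is a finite open cover of the subset `Y`. -/
def IsOpenCoverOn {X : Type*} [TopologicalSpace X] (Y : Set X) (𝒰 : Finset (Set X)) : Prop :=
  (∀ U ∈ 𝒰, IsOpen U) ∧ Y ⊆ ⋃₀ (𝒰 : Set (Set X))

/-- `N(⋁_{i=1}^n f^{-a_i}(𝒰))`, relative to the subset `Y`: the minimal number `m` of elements
of the join cover `⋁_{i=1}^n f^{-a_i}(𝒰)` needed to cover `Y`. -/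
noncomputable def seqCoverCountOn {X : Type*} (f : X → X) (Y : Set X) (a : ℕ → ℕ)
    (𝒰 : Finset (Set X)) (n : ℕ) : ℕ :=
  sInf { m | ∃ c : Fin m → Fin n → Set X, (∀ j i, c j i ∈ 𝒰) ∧
    Y ⊆ ⋃ j, ⋂ i, f^[a i.1] ⁻¹' c j i }

/-- Topological sequence entropy of `f` restricted to the (invariant) subset `Y`,
with respect to the sequence `a`. -/
noncomputable def seqEntropyOn {X : Type*} [TopologicalSpace X] (f : X → X) (Y : Set X)
    (a : ℕ → ℕ) : ℝ≥0∞ :=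
  ⨆ (𝒰 : Finset (Set X)) (_ : IsOpenCoverOn Y 𝒰),
    Filter.limsup
      (fun n : ℕ => ENNReal.ofReal (Real.log (seqCoverCountOn f Y a 𝒰 n) / n)) Filter.atTop

/-- Topological sequence entropy of `f : X → X` with respect to the sequence `a`. -/
noncomputable def seqEntropy {X : Type*} [TopologicalSpace X] (f : X → X) (a : ℕ → ℕ) : ℝ≥0∞ :=
  seqEntropyOn f Set.univ a

/-- The ordinary topological entropy `h(f)`, i.e. the sequence entropy for `A = (0,1,2,…)`. -/
noncomputable def topEntropy {X : Type*} [TopologicalSpace X] (f : X → X) : ℝ≥0∞ :=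
  seqEntropy f id

/-- `h_∞(f|_Y)`: the supremum over all strictly increasing sequences of positive integers of
the topological sequence entropies of `f` restricted to `Y`. -/
noncomputable def supSeqEntropyOn {X : Type*} [TopologicalSpace X] (f : X → X) (Y : Set X) :
    ℝ≥0∞ :=
  ⨆ (a : ℕ → ℕ) (_ : StrictMono a) (_ : 1 ≤ a 0), seqEntropyOn f Y a

/-- `h_∞(f)`: the supremum of the topological sequence entropies of `f`. -/
noncomputable def supSeqEntropy {X : Type*} [TopologicalSpace X] (f : X → X) : ℝ≥0∞ :=
  supSeqEntropyOn f Set.univ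

/-- The ω-limit set `ω_f(x) = ⋂_n closure {f^k(x) : k ≥ n}`. -/
def omegaLimitSet {X : Type*} [TopologicalSpace X] (f : X → X) (x : X) : Set X :=
  ⋂ n : ℕ, closure ((fun k => f^[k] x) '' Set.Ici n)

/-- `ω(f) = ⋃_x ω_f(x)`. -/
def omegaSet {X : Type*} [TopologicalSpace X] (f : X → X) : Set X :=
  ⋃ x : X, omegaLimitSet f x

/-- The non-wandering set `Ω(f)`. -/
def nonWanderingSet {X : Type*} [TopologicalSpace X] (f : X → X) : Set X :=
  { x | ∀ U : Set X, IsOpen U → x ∈ U → ∃ n, 1 ≤ n ∧ (f^[n] ⁻¹' U ∩ U).Nonempty }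

/-- There is an ε-chain from `x` to `y` under `f`. -/
def EpsChain {X : Type*} [MetricSpace X] (f : X → X) (ε : ℝ) (x y : X) : Prop :=
  ∃ n, 1 ≤ n ∧ ∃ c : ℕ → X, c 0 = x ∧ c n = y ∧ ∀ i < n, dist (f (c i)) (c (i + 1)) < ε

/-- The chain recurrent set `CR(f)`. -/
def chainRecurrentSet {X : Type*} [MetricSpace X] (f : X → X) : Set X :=
  { x | ∀ ε > 0, EpsChain f ε x x }

/-- The chain recurrent set of the restriction `f|_Y`: chain recurrence witnessed by
ε-chains lying entirely inside `Y`. -/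
def chainRecurrentSetOn {X : Type*} [MetricSpace X] (f : X → X) (Y : Set X) : Set X :=
  { x ∈ Y | ∀ ε > 0, ∃ n, 1 ≤ n ∧ ∃ c : ℕ → X, c 0 = x ∧ c n = x ∧
      (∀ i ≤ n, c i ∈ Y) ∧ ∀ i < n, dist (f (c i)) (c (i + 1)) < ε }

/-- `I` is a periodic arc of `f` of period `s`: an arc with `f^s(I) ⊆ I` whose iterates
`I, f(I), …, f^{s-1}(I)` are pairwise disjoint. -/
def IsPeriodicArc {X : Type*} [TopologicalSpace X] (f : X → X) (I : Set X) (s : ℕ) : Prop :=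
  IsArc I ∧ 1 ≤ s ∧ Set.MapsTo f^[s] I I ∧
    ∀ i j, i < j → j < s → Disjoint (f^[i] '' I) (f^[j] '' I)

/-- `Orb_f(I) = I ∪ f(I) ∪ … ∪ f^{s-1}(I)`. -/
def arcOrbit {X : Type*} (f : X → X) (I : Set X) (s : ℕ) : Set X :=
  ⋃ i ∈ Finset.range s, f^[i] '' I

/-- `I` is an independence set for the pair `(U, V)` under `f`. -/
def IsIndepSetPair {X : Type*} (f : X → X) (U V : Set X) (I : Finset ℕ) : Prop :=
  ∀ J ⊆ I, J.Nonempty → ∀ s : ℕ → Bool,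
    (⋂ j ∈ J, f^[j] ⁻¹' (if s j then U else V)).Nonempty

/-- `(x, y)` is an IN-pair of `(X, f)`. -/
def INPair {X : Type*} [TopologicalSpace X] (f : X → X) (x y : X) : Prop :=
  ∀ U ∈ nhds x, ∀ V ∈ nhds y, ∀ m : ℕ, ∃ I : Finset ℕ, m ≤ I.card ∧ IsIndepSetPair f U V I

/-- The set `IN(X, f)` of IN-pairs of `(X, f)`. -/
def INPairs {X : Type*} [TopologicalSpace X] (f : X → X) : Set (X × X) :=
  { p | INPair f p.1 p.2 }

/-- `(x, y)` is an IN-pair of the restricted (sub)system `(Y, f|_Y)`, for `Y` invariant. -/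
def INPairOn {X : Type*} [TopologicalSpace X] (f : X → X) (Y : Set X) (x y : X) : Prop :=
  x ∈ Y ∧ y ∈ Y ∧ ∀ U ∈ nhds x, ∀ V ∈ nhds y, ∀ m : ℕ, ∃ I : Finset ℕ, m ≤ I.card ∧
    ∀ J ⊆ I, J.Nonempty → ∀ s : ℕ → Bool,
      (Y ∩ ⋂ j ∈ J, f^[j] ⁻¹' (if s j then U else V)).Nonempty

/-- `(x, y)` is a Li–Yorke pair for `f`. -/
def LiYorkePair {X : Type*} [MetricSpace X] (f : X → X) (x y : X) : Prop :=
  Filter.liminf (fun n : ℕ => dist (f^[n] x) (f^[n] y)) Filter.atTop = 0 ∧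
    0 < Filter.limsup (fun n : ℕ => dist (f^[n] x) (f^[n] y)) Filter.atTop

/-!
The dendrite is a comb: a base segment carrying countably many teeth whose heights tend to `0`. The
map fixes the base, permutes the tips of the teeth in finite cycles, and pushes every other point
down: the gap between a point of a tooth and the tip doubles at each step until the point falls
into the base. Hence every point is eventually periodic, which rules out Li–Yorke pairs, and the
height is a Lyapunov function that strictly decreases off the periodic points, so that
`Ω(f) = P(f)`.

A tooth moves by at most a multiple of its height. So the points of small height move slowly, while
on each of the finitely many remaining teeth an orbit of length `n` follows the tip, then leaves it
at one of `n + 1` times and is stationary after bounded time. This gives entropy zero. On the other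
hand, a tooth of height `1 / (m + 1)` needs only about `m + 1` steps to cross `[0, 1]`, and is left
with exponentially long gaps between the times `2 ^ m, …, 2 ^ (2 * m - 1)`. Its cycle can therefore
visit the left and the right part of the base at these times in any prescribed order, and realizing
all `2 ^ m` orders for every `m` gives positive entropy along the sequence `2 ^ n`, already on the
tips, which are periodic.
-/

/-- The point `z` *separates* `p` from `q`: the complement of `z` splits into two disjoint open
sets, one containing `p` and the other containing `q`. -/
def Separates {X : Type*} [TopologicalSpace X] (z p q : X) : Prop :=
  ∃ U V : Set X, IsOpen U ∧ IsOpen V ∧ Disjoint U V ∧ U ∪ V = {z}ᶜ ∧ p ∈ U ∧ q ∈ V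

section SimpleClosedCurve

variable {X : Type*} [TopologicalSpace X]

lemma Separates.symm {z p q : X} : Separates z p q → Separates z q p := by
  rintro ⟨U, V, hU, hV, hUV, hz, hp, hq⟩
  exact ⟨V, U, hV, hU, hUV.symm, union_comm U V ▸ hz, hq, hp⟩

lemma isPreconnected_compl_singleton_circle (v : Metric.sphere (0 : ℂ) 1) :
    IsPreconnected ({v}ᶜ : Set (Metric.sphere (0 : ℂ) 1)) := by
  have hv : ‖(v : ℂ)‖ = 1 := by simp
  have himage := (stereographic hv).symm.image_source_eq_target
  have hcont := (stereographic hv).symm.continuousOn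
  simp only [OpenPartialHomeomorph.symm_source, OpenPartialHomeomorph.symm_target,
    stereographic_target, stereographic_source] at himage hcont
  exact himage ▸ isPreconnected_univ.image _ hcont

lemma IsSimpleClosedCurve.nontrivial {S : Set X} (hS : IsSimpleClosedCurve S) : S.Nontrivial := by
  obtain ⟨φ⟩ := hS
  have : Nontrivial (Metric.sphere (0 : ℂ) 1) :=
    ⟨⟨1, by simp⟩, ⟨-1, by simp⟩, by simp [Subtype.ext_iff, Complex.ext_iff]; norm_num⟩
  exact nontrivial_coe_sort.1 φ.toEquiv.nontrivial

lemma IsSimpleClosedCurve.isPreconnected {S : Set X} (hS : IsSimpleClosedCurve S) :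
    IsPreconnected S := by
  obtain ⟨φ⟩ := hS
  have : PreconnectedSpace (Metric.sphere (0 : ℂ) 1) :=
    isPreconnected_iff_preconnectedSpace.1 (isPreconnected_sphere (by simp) 0 1)
  have hrange : range (Subtype.val ∘ φ.symm) = S := by
    rw [φ.symm.surjective.range_comp, Subtype.range_coe]
  exact hrange ▸ isPreconnected_range (continuous_subtype_val.comp φ.symm.continuous)

lemma IsSimpleClosedCurve.isPreconnected_diff_singleton {S : Set X} (hS : IsSimpleClosedCurve S)
    (z : X) : IsPreconnected (S \ {z}) := by
  by_cases hz : z ∈ S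
  · obtain ⟨φ⟩ := hS
    have himage : S \ {z} = (fun t => (φ.symm t : X)) '' {φ ⟨z, hz⟩}ᶜ := by
      ext x
      constructor
      · rintro ⟨hx, hxz⟩
        exact ⟨φ ⟨x, hx⟩, by simpa using hxz, by simp⟩
      · rintro ⟨t, ht, rfl⟩
        refine ⟨(φ.symm t).2, fun h => ht ?_⟩
        simpa using congrArg φ (Subtype.ext h : φ.symm t = ⟨z, hz⟩)
    rw [himage]
    exact (isPreconnected_compl_singleton_circle _).image _ (by fun_prop)
  · rw [sdiff_singleton_eq_self hz]
    exact hS.isPreconnected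

lemma not_isSimpleClosedCurve_of_separates (h : ∀ p q : X, p ≠ q → ∃ z, Separates z p q)
    (S : Set X) : ¬ IsSimpleClosedCurve S := by
  intro hS
  obtain ⟨p, hp, q, hq, hpq⟩ := hS.nontrivial
  obtain ⟨z, U, V, hU, hV, hUV, hz, hpU, hqV⟩ := h p q hpq
  have ne_z : ∀ x ∈ U ∪ V, x ≠ z := fun x hx => by rwa [hz] at hx
  obtain ⟨x, -, hxU, hxV⟩ := hS.isPreconnected_diff_singleton z U V hU hV
    (hz ▸ fun x hx => hx.2) ⟨p, ⟨hp, ne_z p (.inl hpU)⟩, hpU⟩ ⟨q, ⟨hq, ne_z q (.inr hqV)⟩, hqV⟩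
  exact disjoint_left.1 hUV hxU hxV

end SimpleClosedCurve

section Iterate

variable {X : Type*} {f : X → X} {x y : X}

lemma iterate_le_of_map_le {φ : X → ℝ} (hφf : ∀ x, φ (f x) ≤ φ x) (n : ℕ) (x : X) :
    φ (f^[n] x) ≤ φ x := by
  induction n with
  | zero => rfl
  | succ n ih => exact iterate_succ_apply' f n x ▸ (hφf _).trans ih

lemma finite_range_iterate_of_mem_periodicPts (hx : x ∈ periodicPts f) :
    (range fun n => f^[n] x).Finite := by
  obtain ⟨m, hm, hx⟩ := hx
  refine ((finite_Iio m).image fun n => f^[n] x).subset ?_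
  rintro _ ⟨n, rfl⟩
  exact ⟨n % m, Nat.mod_lt n hm, hx.iterate_mod_apply n⟩

lemma iterate_ne_iterate_of_mem_periodicPts (hx : x ∈ periodicPts f) (hy : y ∈ periodicPts f)
    (hxy : x ≠ y) (n : ℕ) : f^[n] x ≠ f^[n] y := by
  obtain ⟨k, hk, hx⟩ := hx
  obtain ⟨l, hl, hy⟩ := hy
  induction n with
  | zero => exact hxy
  | succ n ih =>
    rw [iterate_succ_apply', iterate_succ_apply']
    exact mt ((hx.apply_iterate n).eq_of_apply_eq (hy.apply_iterate n) hk hl) ih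

end Iterate

section NonWandering

variable {X : Type*} [TopologicalSpace X] {f : X → X}

lemma periodicPts_subset_nonWanderingSet : periodicPts f ⊆ nonWanderingSet f := by
  rintro x ⟨n, hn, hx⟩ U - hxU
  exact ⟨n, hn, x, by rwa [mem_preimage, hx.eq], hxU⟩

/-- Where a Lyapunov function strictly drops, it drops past a level `c`, and this level cannot be
crossed back. -/
lemma nonWanderingSet_subset_of_map_le (hf : Continuous f) {φ : X → ℝ} (hφ : Continuous φ)
    (hφf : ∀ x, φ (f x) ≤ φ x) : nonWanderingSet f ⊆ {x | φ (f x) = φ x} := by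
  intro x hx
  by_contra hne
  obtain ⟨c, hfc, hcx⟩ := exists_between (lt_of_le_of_ne (hφf x) hne)
  obtain ⟨n, hn, y, hny, hy⟩ := hx {y | φ (f y) < c ∧ c < φ y}
    ((isOpen_lt (hφ.comp hf) continuous_const).inter (isOpen_lt continuous_const hφ)) ⟨hfc, hcx⟩
  obtain ⟨k, rfl⟩ := Nat.exists_eq_add_of_le' hn
  have hdrop : φ (f^[k + 1] y) ≤ φ (f y) := iterate_le_of_map_le hφf k (f y)
  exact lt_asymm hny.2 (hdrop.trans_lt hy.1)

end NonWandering

section LiYorke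

variable {X : Type*} [MetricSpace X] {f : X → X} {x y : X}

lemma LiYorkePair.iterate (h : LiYorkePair f x y) (k : ℕ) :
    LiYorkePair f (f^[k] x) (f^[k] y) := by
  simp only [LiYorkePair, ← iterate_add_apply]
  rwa [liminf_nat_add (fun n => dist (f^[n] x) (f^[n] y)),
    limsup_nat_add (fun n => dist (f^[n] x) (f^[n] y))]

/-- The distances along the two orbits take finitely many values, all positive if `x ≠ y`. -/
lemma not_liYorkePair_of_mem_periodicPts (hx : x ∈ periodicPts f) (hy : y ∈ periodicPts f) :
    ¬ LiYorkePair f x y := by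
  rintro ⟨hliminf, hlimsup⟩
  rcases eq_or_ne x y with rfl | hxy
  · simp at hlimsup
  set u : ℕ → ℝ := fun n => dist (f^[n] x) (f^[n] y)
  have hfin : (range u).Finite := by
    refine ((finite_range_iterate_of_mem_periodicPts hx).image2 dist
      (finite_range_iterate_of_mem_periodicPts hy)).subset ?_
    rintro _ ⟨n, rfl⟩
    exact mem_image2_of_mem (mem_range_self n) (mem_range_self n)
  obtain ⟨n, hn⟩ := (range_nonempty u).csInf_mem hfin
  have hpos : 0 < u n := dist_pos.2 (iterate_ne_iterate_of_mem_periodicPts hx hy hxy n)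
  have hle : u n ≤ liminf u atTop :=
    le_liminf_of_le hfin.bddAbove.isBoundedUnder_of_range.isCoboundedUnder_ge
      (.of_forall fun k => hn ▸ csInf_le hfin.bddBelow (mem_range_self k))
  exact hpos.not_ge (hliminf ▸ hle)

lemma not_liYorkePair_of_iterate_mem_periodicPts {k l : ℕ} (hx : f^[k] x ∈ periodicPts f)
    (hy : f^[l] y ∈ periodicPts f) : ¬ LiYorkePair f x y := by
  have iterate_mem : ∀ {z : X}, z ∈ periodicPts f → ∀ n, f^[n] z ∈ periodicPts f :=
    fun ⟨m, hm, hz⟩ n => ⟨m, hm, hz.apply_iterate n⟩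
  intro h
  refine not_liYorkePair_of_mem_periodicPts ?_ ?_ (h.iterate (k + l))
  · rw [add_comm, iterate_add_apply]
    exact iterate_mem hx l
  · rw [iterate_add_apply]
    exact iterate_mem hy k

end LiYorke

/-- Up to time `n` and precision `ε`, the orbits starting in `s` are shadowed by at most `M`
sequences of points. These sequences need not be orbits: only their number matters for entropy. -/
def OrbitsShadowed {X : Type*} [PseudoMetricSpace X] (f : X → X) (s : Set X) (ε : ℝ) (n M : ℕ) :
    Prop :=
  ∃ T : Finset (ℕ → X), T.card ≤ M ∧ ∀ x ∈ s, ∃ c ∈ T, ∀ j < n, dist (f^[j] x) (c j) < ε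

namespace OrbitsShadowed

variable {X : Type*} [PseudoMetricSpace X] {f : X → X} {s t : Set X} {ε : ℝ} {n M N : ℕ}

lemma mono (h : OrbitsShadowed f t ε n M) (hst : s ⊆ t) (hMN : M ≤ N) :
    OrbitsShadowed f s ε n N := by
  obtain ⟨T, hcard, hT⟩ := h
  exact ⟨T, hcard.trans hMN, fun x hx => hT x (hst hx)⟩

lemma of_fintype {κ : Type*} [Fintype κ] (c : κ → ℕ → X)
    (hc : ∀ x ∈ s, ∃ w, ∀ j < n, dist (f^[j] x) (c w j) < ε) :
    OrbitsShadowed f s ε n (Fintype.card κ) := by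
  classical
  refine ⟨Finset.univ.image c, Finset.card_image_le, fun x hx => ?_⟩
  obtain ⟨w, hw⟩ := hc x hx
  exact ⟨c w, Finset.mem_image_of_mem c (Finset.mem_univ w), hw⟩

lemma union (hs : OrbitsShadowed f s ε n M) (ht : OrbitsShadowed f t ε n N) :
    OrbitsShadowed f (s ∪ t) ε n (M + N) := by
  classical
  obtain ⟨S, hcardS, hS⟩ := hs
  obtain ⟨T, hcardT, hT⟩ := ht
  refine ⟨S ∪ T, (Finset.card_union_le S T).trans (add_le_add hcardS hcardT), ?_⟩
  rintro x (hx | hx)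
  · obtain ⟨c, hc, hxc⟩ := hS x hx
    exact ⟨c, Finset.mem_union_left T hc, hxc⟩
  · obtain ⟨c, hc, hxc⟩ := hT x hx
    exact ⟨c, Finset.mem_union_right S hc, hxc⟩

lemma biUnion {ι : Type*} (F : Finset ι) {s : ι → Set X}
    (h : ∀ i ∈ F, OrbitsShadowed f (s i) ε n M) :
    OrbitsShadowed f (⋃ i ∈ F, s i) ε n (F.card * M) := by
  classical
  choose! T hcard hT using h
  refine ⟨F.biUnion T, Finset.card_biUnion_le_card_mul F T M hcard, fun x hx => ?_⟩
  obtain ⟨i, hi, hxi⟩ := mem_iUnion₂.1 hx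
  obtain ⟨c, hc, hxc⟩ := hT i hi x hxi
  exact ⟨c, Finset.mem_biUnion.2 ⟨i, hi, hc⟩, hxc⟩

lemma of_dist_iterate_le {Z : Finset X} (hZ : ∀ x, ∃ z ∈ Z, dist x z < ε / 2)
    (hs : MapsTo f s s) {k : ℕ} (hk : 0 < k)
    (hslow : ∀ x ∈ s, ∀ i < k, dist (f^[i] x) x ≤ ε / 2) (n : ℕ) :
    OrbitsShadowed f s ε n (Z.card ^ (n / k + 1)) := by
  choose z hzZ hz using hZ
  have h : OrbitsShadowed f s ε n (Fintype.card (Fin (n / k + 1) → Z)) := by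
    refine of_fintype (fun w j => w ⟨min (j / k) (n / k), by lia⟩) fun x hx => ?_
    refine ⟨fun i => ⟨z (f^[k * i] x), hzZ _⟩, fun j hj => ?_⟩
    have hblock : min (j / k) (n / k) = j / k := min_eq_left (Nat.div_le_div_right hj.le)
    have hsplit : f^[j] x = f^[j % k] (f^[k * (j / k)] x) := by
      rw [← iterate_add_apply, Nat.mod_add_div]
    simp only [hblock]
    calc dist (f^[j] x) (z (f^[k * (j / k)] x))
      _ ≤ dist (f^[j] x) (f^[k * (j / k)] x)
          + dist (f^[k * (j / k)] x) (z (f^[k * (j / k)] x)) := dist_triangle _ _ _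
      _ < ε / 2 + ε / 2 := add_lt_add_of_le_of_lt
          (hsplit ▸ hslow _ (hs.iterate _ hx) _ (Nat.mod_lt j hk)) (hz _)
      _ = ε := add_halves ε
  simpa using h

lemma of_follow_then_freeze {Z : Finset X} (hZ : ∀ x, ∃ z ∈ Z, dist x z < ε) (t : ℕ → X) (m : ℕ)
    (hfrozen : ∀ x ∈ s, ∀ T, ε ≤ dist (f^[T] x) (t T) → ∀ j ≥ T + m, f^[j] x = f^[T + m] x)
    (n : ℕ) : OrbitsShadowed f s ε n ((n + 1) * Z.card ^ (m + 1)) := by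
  classical
  choose z hzZ hz using hZ
  have h : OrbitsShadowed f s ε n (Fintype.card (Fin (n + 1) × (Fin (m + 1) → Z))) := by
    refine of_fintype
      (fun w j => if j < w.1 then t j else w.2 ⟨min (j - w.1) m, by lia⟩) fun x hx => ?_
    have hexit : ∃ T, T = n ∨ ε ≤ dist (f^[T] x) (t T) := ⟨n, .inl rfl⟩
    set T := Nat.find hexit
    have hTn : T ≤ n := Nat.find_min' hexit (.inl rfl)
    refine ⟨(⟨T, by lia⟩, fun i => ⟨z (f^[T + i] x), hzZ _⟩), fun j hj => ?_⟩
    by_cases hjT : j < T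
    · have hfollow := Nat.find_min hexit hjT
      push Not at hfollow
      simpa only [hjT, if_true] using hfollow.2
    · have hleave : ε ≤ dist (f^[T] x) (t T) := (Nat.find_spec hexit).resolve_left (by lia)
      have hfreeze : f^[j] x = f^[T + min (j - T) m] x := by
        rcases le_total (j - T) m with hjm | hmj
        · rw [min_eq_left hjm, Nat.add_sub_cancel' (not_lt.1 hjT)]
        · rw [min_eq_right hmj, hfrozen x hx T hleave j (by lia)]
      simpa only [hjT, if_false, hfreeze] using hz _
  simpa using h

lemma seqCoverCountOn_le {𝒰 : Finset (Set X)} (h𝒰 : ∀ x, ∃ U ∈ 𝒰, Metric.ball x ε ⊆ U)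
    (h : OrbitsShadowed f s ε n M) : seqCoverCountOn f s id 𝒰 n ≤ M := by
  obtain ⟨T, hcard, hT⟩ := h
  choose U hU hball using h𝒰
  refine le_trans (Nat.sInf_le ⟨fun j i => U ((T.equivFin.symm j : ℕ → X) i), fun j i => hU _,
    fun x hx => ?_⟩) hcard
  obtain ⟨c, hc, hxc⟩ := hT x hx
  refine mem_iUnion.2 ⟨T.equivFin ⟨c, hc⟩, mem_iInter.2 fun i => hball _ ?_⟩
  simpa using hxc i i.2

end OrbitsShadowed

section ZeroEntropy

lemma limsup_ofReal_log_div_le {N : ℕ → ℕ} {A C k : ℕ} (hA : 0 < A) (hC : 0 < C)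
    (hN : ∀ n, N n ≤ A * (n + 1) * C ^ (n / k)) :
    limsup (fun n => ENNReal.ofReal (Real.log (N n) / n)) atTop
      ≤ ENNReal.ofReal (Real.log C / k) := by
  have hbound : ∀ n ≥ 1, Real.log (N n) / n
      ≤ Real.log (2 * A) / n + Real.log n / n + Real.log C / k := by
    intro n hn
    have hn' : (0 : ℝ) < n := by exact_mod_cast hn
    have hle : N n ≤ 2 * A * n * C ^ (n / k) :=
      (hN n).trans (Nat.mul_le_mul_right _ (by nlinarith))
    have hlog : Real.log (N n) ≤ Real.log (2 * A) + Real.log n + (n / k : ℕ) * Real.log C := by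
      rw [← Real.log_pow, ← Real.log_mul (by positivity) hn'.ne',
        ← Real.log_mul (by positivity) (by positivity)]
      rcases Nat.eq_zero_or_pos (N n) with hzero | hpos
      · rw [hzero, Nat.cast_zero, Real.log_zero]
        exact_mod_cast Real.log_natCast_nonneg (2 * A * n * C ^ (n / k))
      · exact Real.log_le_log (by exact_mod_cast hpos) (by exact_mod_cast hle)
    have hdiv : ((n / k : ℕ) : ℝ) * Real.log C ≤ n / k * Real.log C :=
      mul_le_mul_of_nonneg_right Nat.cast_div_le (Real.log_natCast_nonneg C)
    calc Real.log (N n) / n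
      _ ≤ (Real.log (2 * A) + Real.log n + n / k * Real.log C) / n := by gcongr; linarith
      _ = Real.log (2 * A) / n + Real.log n / n + Real.log C / k := by field_simp
  have hlim : Tendsto (fun n : ℕ => Real.log (2 * A) / n + Real.log n / n + Real.log C / k) atTop
      (𝓝 (Real.log C / k)) := by
    have hlog := Real.isLittleO_log_id_atTop.tendsto_div_nhds_zero.comp
      (tendsto_natCast_atTop_atTop (R := ℝ))
    simpa using ((tendsto_const_div_atTop_nhds_zero_nat (Real.log (2 * A))).add hlog).add_const
      (Real.log C / k)
  rw [← (ENNReal.tendsto_ofReal hlim).limsup_eq]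
  refine limsup_le_limsup ?_
  filter_upwards [eventually_ge_atTop 1] with n hn
  exact ENNReal.ofReal_le_ofReal (hbound n hn)

lemma topEntropy_eq_zero_of_orbitsShadowed {X : Type*} [PseudoMetricSpace X] [CompactSpace X]
    {f : X → X} (h : ∀ ε > 0, ∃ C > 0, ∀ k > 0, ∃ A > 0, ∀ n,
      OrbitsShadowed f univ ε n (A * (n + 1) * C ^ (n / k))) :
    topEntropy f = 0 := by
  refine le_antisymm (iSup₂_le fun 𝒰 h𝒰 => ?_) zero_le
  obtain ⟨ε, hε, hball⟩ := lebesgue_number_lemma_of_metric_sUnion isCompact_univ h𝒰.1 h𝒰.2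
  obtain ⟨C, hC, hshadow⟩ := h ε hε
  have hlim : Tendsto (fun k : ℕ => ENNReal.ofReal (Real.log C / k)) atTop (𝓝 0) := by
    simpa using ENNReal.tendsto_ofReal (tendsto_const_div_atTop_nhds_zero_nat (Real.log C))
  refine ge_of_tendsto hlim ((eventually_gt_atTop 0).mono fun k hk => ?_)
  obtain ⟨A, hA, hk⟩ := hshadow k hk
  exact limsup_ofReal_log_div_le hA hC fun n =>
    (hk n).seqCoverCountOn_le fun x => hball x (mem_univ x)

end ZeroEntropy

section PositiveSequenceEntropy

variable {X : Type*} {f : X → X} {Y U V : Set X} {a : ℕ → ℕ}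

lemma le_seqCoverCountOn {𝒰 : Finset (Set X)} {m n : ℕ} (h𝒰 : ∀ x, ∃ U ∈ 𝒰, x ∈ U)
    (h : ∀ (k : ℕ) (c : Fin k → Fin n → Set X), (∀ j i, c j i ∈ 𝒰) →
      Y ⊆ ⋃ j, ⋂ i, f^[a i.1] ⁻¹' c j i → m ≤ k) :
    m ≤ seqCoverCountOn f Y a 𝒰 n := by
  choose U hU hmem using h𝒰
  refine le_csInf ?_ (by rintro k ⟨c, hc, hY⟩; exact h k c hc hY)
  let e := Fintype.equivFin (Fin n → 𝒰)
  refine ⟨_, fun j i => e.symm j i, fun j i => (e.symm j i).2, fun x _ => ?_⟩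
  refine mem_iUnion.2 ⟨e fun i => ⟨U (f^[a i] x), hU _⟩, mem_iInter.2 fun i => ?_⟩
  simpa only [mem_preimage, Equiv.symm_apply_apply] using hmem (f^[a i] x)

/-- An element of the join cover determines the itinerary of every point it contains: a point
avoiding one of `U`, `V` at a given time lies in the other. -/
lemma two_pow_le_seqCoverCountOn {m : ℕ} (hUV : U ∪ V = univ)
    (h : ∀ w : Fin m → Bool, ∃ x ∈ Y, ∀ j : Fin m, f^[a (m + j)] x ∉ if w j then V else U) :
    2 ^ m ≤ seqCoverCountOn f Y a {U, V} (m + m) := by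
  refine le_seqCoverCountOn (fun x => ?_) fun k c hc hY => ?_
  · rcases hUV.ge (mem_univ x) with hx | hx
    · exact ⟨U, by simp, hx⟩
    · exact ⟨V, by simp, hx⟩
  choose x hxY hx using h
  have hcell : ∀ w, ∃ l, ∀ i : Fin (m + m), f^[a i] (x w) ∈ c l i := fun w => by
    simpa only [mem_iUnion, mem_iInter, mem_preimage] using hY (hxY w)
  choose l hl using hcell
  have bit_eq : ∀ {A : Set X} {b b' : Bool} {y y' : X}, A = U ∨ A = V →
      (y ∉ if b then V else U) → (y' ∉ if b' then V else U) → y ∈ A → y' ∈ A → b = b' := by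
    rintro A (_ | _) (_ | _) y y' (rfl | rfl) hy hy' hyA hyA' <;> simp_all
  have hinj : Injective l := by
    intro w w' hww'
    funext j
    have hmem := hl w (Fin.natAdd m j)
    have hmem' := hl w' (Fin.natAdd m j)
    rw [← hww'] at hmem'
    have hcell : c (l w) (Fin.natAdd m j) = U ∨ c (l w) (Fin.natAdd m j) = V := by
      simpa only [Finset.mem_insert, Finset.mem_singleton] using hc (l w) (Fin.natAdd m j)
    exact bit_eq hcell (hx w j) (hx w' j) hmem hmem'
  simpa using Fintype.card_le_of_injective l hinj

lemma ofReal_log_two_div_two_le_seqEntropyOn [TopologicalSpace X] (hU : IsOpen U) (hV : IsOpen V)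
    (hUV : U ∪ V = univ)
    (h : ∃ᶠ m in atTop, ∀ w : Fin m → Bool, ∃ x ∈ Y, ∀ j : Fin m,
      f^[a (m + j)] x ∉ if w j then V else U) :
    ENNReal.ofReal (Real.log 2 / 2) ≤ seqEntropyOn f Y a := by
  have hcover : IsOpenCoverOn Y {U, V} := by
    refine ⟨by simp [hU, hV], ?_⟩
    simp only [Finset.coe_insert, Finset.coe_singleton, sUnion_insert, sUnion_singleton, hUV,
      subset_univ]
  have hlarge : ∃ᶠ n : ℕ in atTop, ENNReal.ofReal (Real.log 2 / 2)
      ≤ ENNReal.ofReal (Real.log (seqCoverCountOn f Y a {U, V} n) / n) := by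
    have htends : Tendsto (fun m : ℕ => m + m) atTop atTop := tendsto_id.atTop_add_atTop tendsto_id
    refine htends.frequently ((h.and_eventually (eventually_gt_atTop 0)).mono ?_)
    rintro m ⟨hm, hm0⟩
    have hcount : (2 : ℝ) ^ m ≤ seqCoverCountOn f Y a {U, V} (m + m) := by
      exact_mod_cast two_pow_le_seqCoverCountOn hUV hm
    refine ENNReal.ofReal_le_ofReal ?_
    calc Real.log 2 / 2 = Real.log (2 ^ m) / (m + m : ℕ) := by
          rw [Real.log_pow]; push_cast; field_simp; ring
      _ ≤ _ := by gcongr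
  exact le_iSup₂_of_le {U, V} hcover (le_limsup_of_frequently_le hlarge)

lemma supSeqEntropyOn_pos [TopologicalSpace X] (ha : StrictMono a) (ha0 : 1 ≤ a 0)
    (hU : IsOpen U) (hV : IsOpen V) (hUV : U ∪ V = univ)
    (h : ∃ᶠ m in atTop, ∀ w : Fin m → Bool, ∃ x ∈ Y, ∀ j : Fin m,
      f^[a (m + j)] x ∉ if w j then V else U) :
    0 < supSeqEntropyOn f Y := by
  have hpos : 0 < ENNReal.ofReal (Real.log 2 / 2) := by
    rw [ENNReal.ofReal_pos]
    positivity
  exact (hpos.trans_le (ofReal_log_two_div_two_le_seqEntropyOn hU hV hUV h)).trans_le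
    (le_iSup_of_le a (le_iSup₂_of_le ha ha0 le_rfl))

end PositiveSequenceEntropy

lemma locallyConnectedSpace_of_isPreconnected_inter_ball {X : Type*} [PseudoMetricSpace X]
    {s : Set X} (h : ∀ p ∈ s, ∃ R > 0, ∀ r ≤ R, IsPreconnected (s ∩ Metric.ball p r)) :
    LocallyConnectedSpace s := by
  choose! R hR hconn using h
  refine locallyConnectedSpace_of_connected_bases (fun p r => Metric.ball p r)
    (fun p r => 0 < r ∧ r ≤ R p) (fun p => ?_) fun p r hr => ?_
  · refine Metric.nhds_basis_ball.to_hasBasis (fun r hr => ?_) fun r hr => ⟨r, hr.1, subset_rfl⟩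
    exact ⟨min r (R p), ⟨lt_min hr (hR p p.2), min_le_right r (R p)⟩,
      Metric.ball_subset_ball (min_le_left r (R p))⟩
  · rw [← Topology.IsInducing.subtypeVal.isPreconnected_image]
    exact Subtype.image_preimage_coe s (Metric.ball p.1 r) ▸ hconn p p.2 r hr.2

/-- The shape of a comb: a horizontal base `[0, 2] × {0}` with vertical teeth attached to it, the
tooth `i` having its foot at `(pos i, 0)` and its tip at `(pos i, height i)`. Only finitely many
teeth exceed any given positive height, which makes the comb a dendrite. -/
structure Comb (ι : Type*) where
  pos : ι → ℝ
  height : ι → ℝ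
  pos_injective : Injective pos
  pos_mem : ∀ i, pos i ∈ Icc (0 : ℝ) 2
  height_pos : ∀ i, 0 < height i
  height_le_one : ∀ i, height i ≤ 1
  finite_le_height : ∀ δ > 0, {i | δ ≤ height i}.Finite

namespace Comb

variable {ι : Type*} (C : Comb ι)

/-- The base of a comb together with its teeth indexed by `A`. -/
def subcomb (A : Set ι) : Set (ℝ × ℝ) :=
  Icc 0 2 ×ˢ {0} ∪ ⋃ i ∈ A, {C.pos i} ×ˢ Icc 0 (C.height i)

/-- The underlying set of a comb in the plane. -/
def space : Set (ℝ × ℝ) := C.subcomb univ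

variable {C} {A : Set ι} {p : ℝ × ℝ}

lemma mem_subcomb : p ∈ C.subcomb A ↔
    p.1 ∈ Icc 0 2 ∧ p.2 = 0 ∨ ∃ i ∈ A, p.1 = C.pos i ∧ p.2 ∈ Icc 0 (C.height i) := by
  simp only [subcomb, mem_union, mem_prod, mem_singleton_iff, mem_iUnion, exists_prop]

lemma mem_space : p ∈ C.space ↔
    p.1 ∈ Icc 0 2 ∧ p.2 = 0 ∨ ∃ i, p.1 = C.pos i ∧ p.2 ∈ Icc 0 (C.height i) := by
  simp only [space, mem_subcomb, mem_univ, true_and]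

lemma mem_space_of_base {x : ℝ} (hx : x ∈ Icc (0 : ℝ) 2) : (x, 0) ∈ C.space :=
  mem_space.2 (.inl ⟨hx, rfl⟩)

lemma mem_space_of_tooth {i : ι} {y : ℝ} (hy : y ∈ Icc 0 (C.height i)) :
    (C.pos i, y) ∈ C.space :=
  mem_space.2 (.inr ⟨i, rfl, hy⟩)

lemma subcomb_subset : C.subcomb A ⊆ Icc 0 2 ×ˢ Icc 0 1 := by
  intro p hp
  rcases mem_subcomb.1 hp with ⟨hx, hy⟩ | ⟨i, -, hx, hy⟩
  · exact ⟨hx, by simp [hy]⟩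
  · exact ⟨hx ▸ C.pos_mem i, hy.1, hy.2.trans (C.height_le_one i)⟩

lemma fst_mem (hp : p ∈ C.space) : p.1 ∈ Icc (0 : ℝ) 2 := (subcomb_subset hp).1

lemma snd_nonneg (hp : p ∈ C.space) : 0 ≤ p.2 := (subcomb_subset hp).2.1

lemma exists_tooth (hp : p ∈ C.space) (hp2 : 0 < p.2) :
    ∃ i, p.1 = C.pos i ∧ p.2 ≤ C.height i := by
  rcases mem_space.1 hp with ⟨-, hy⟩ | ⟨i, hx, hy⟩
  · exact absurd hy hp2.ne'
  · exact ⟨i, hx, hy.2⟩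

lemma mk_mem_space_of_le (hp : p ∈ C.space) {y : ℝ} (hy : y ∈ Icc 0 p.2) : (p.1, y) ∈ C.space := by
  rcases hy.1.eq_or_lt with rfl | hpos
  · exact mem_space_of_base (fst_mem hp)
  · obtain ⟨i, hx, hi⟩ := exists_tooth hp (hpos.trans_le hy.2)
    exact hx ▸ mem_space_of_tooth ⟨hy.1, hy.2.trans hi⟩

lemma mem_subcomb_compl_singleton {i : ι} (hp : p ∈ C.space) (hp2 : 0 < p.2) :
    p ∈ C.subcomb {i}ᶜ ↔ p.1 ≠ C.pos i := by
  obtain ⟨j, hx, hj⟩ := exists_tooth hp hp2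
  rw [mem_subcomb, hx, C.pos_injective.ne_iff]
  constructor
  · rintro (⟨-, hy⟩ | ⟨k, hk, hjk, -⟩)
    · exact absurd hy hp2.ne'
    · exact C.pos_injective hjk ▸ hk
  · exact fun hji => .inr ⟨j, hji, rfl, hp2.le, hj⟩

variable (C A) in
lemma isClosed_subcomb : IsClosed (C.subcomb A) := by
  refine isClosed_of_closure_subset fun p hp => ?_
  have hrect := closure_minimal subcomb_subset (isClosed_Icc.prod isClosed_Icc) hp
  rcases hrect.2.1.eq_or_lt with hy | hy
  · exact mem_subcomb.2 (.inl ⟨hrect.1, hy.symm⟩)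
  set T := ⋃ i ∈ {i ∈ A | p.2 / 2 ≤ C.height i}, {C.pos i} ×ˢ Icc 0 (C.height i)
  have hT : IsClosed T :=
    ((C.finite_le_height _ (half_pos hy)).subset fun i hi => hi.2).isClosed_biUnion
      fun i _ => isClosed_singleton.prod isClosed_Icc
  have hupper : C.subcomb A ∩ {q | p.2 / 2 < q.2} ⊆ T := by
    rintro q ⟨hq, hpq : p.2 / 2 < q.2⟩
    rcases mem_subcomb.1 hq with ⟨-, hq2⟩ | ⟨i, hi, hx, hqi⟩
    · linarith
    · exact mem_biUnion ⟨hi, hpq.le.trans hqi.2⟩ ⟨hx, hqi⟩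
  have hopen : IsOpen {q : ℝ × ℝ | p.2 / 2 < q.2} := isOpen_lt continuous_const continuous_snd
  have hpT : p ∈ T :=
    closure_minimal hupper hT (hopen.closure_inter ⟨hp, half_lt_self hy⟩)
  exact .inr (biUnion_mono (fun i hi => hi.1) (fun _ _ => subset_rfl) hpT)

variable (C) in
lemma isCompact_space : IsCompact C.space :=
  (isCompact_Icc.prod isCompact_Icc).of_isClosed_subset (C.isClosed_subcomb univ) subcomb_subset

lemma exists_ball_inter_space_subset (hp : p ∈ C.space) (hp2 : 0 < p.2) :
    ∃ i, ∃ R > 0, C.space ∩ Metric.ball p R ⊆ {C.pos i} ×ˢ Icc 0 (C.height i) := by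
  obtain ⟨i, hx, -⟩ := exists_tooth hp hp2
  have hfar : p ∈ (C.subcomb {i}ᶜ)ᶜ := fun h => (mem_subcomb_compl_singleton hp hp2).1 h hx
  obtain ⟨R, hR, hball⟩ := Metric.isOpen_iff.1 (C.isClosed_subcomb {i}ᶜ).isOpen_compl p hfar
  refine ⟨i, R, hR, fun q ⟨hq, hqR⟩ => ?_⟩
  rcases mem_space.1 hq with hbase | ⟨j, hj, hqj⟩
  · exact absurd (mem_subcomb.2 (.inl hbase)) (hball hqR)
  · obtain rfl : j = i := by
      by_contra hji
      exact hball hqR (mem_subcomb.2 (.inr ⟨j, hji, hj, hqj⟩))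
    exact ⟨hj, hqj⟩

/-- A point of the comb close to a base point is joined to it by first going down to the base. -/
lemma isPreconnected_space_inter_ball_of_base (hp : p ∈ C.space) (hp2 : p.2 = 0) (r : ℝ) :
    IsPreconnected (C.space ∩ Metric.ball p r) := by
  obtain ⟨x, y⟩ := p
  obtain rfl : y = 0 := hp2
  rcases le_or_gt r 0 with hr | hr
  · rw [Metric.ball_eq_empty.2 hr, inter_empty]
    exact isPreconnected_empty
  rw [← ball_prod_same]
  refine isPreconnected_of_forall (x, 0) fun q ⟨hq, hqx, hqy⟩ => ?_
  have hq2 := snd_nonneg hq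
  refine ⟨uIcc x q.1 ×ˢ {0} ∪ {q.1} ×ˢ Icc 0 q.2, ?_, .inl ⟨left_mem_uIcc, rfl⟩,
    .inr ⟨rfl, right_mem_Icc.2 hq2⟩, ?_⟩
  · have huIcc : uIcc x q.1 ⊆ Metric.ball x r :=
      (convex_ball x r).ordConnected.uIcc_subset (Metric.mem_ball_self hr) hqx
    have hIcc : Icc 0 q.2 ⊆ Metric.ball 0 r :=
      (convex_ball 0 r).ordConnected.out (Metric.mem_ball_self hr) hqy
    rintro ⟨u, v⟩ (⟨hu, rfl⟩ | ⟨rfl, hv⟩)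
    · exact ⟨mem_space_of_base (uIcc_subset_Icc (fst_mem hp) (fst_mem hq) hu), huIcc hu,
        Metric.mem_ball_self hr⟩
    · exact ⟨mk_mem_space_of_le hq hv, hqx, hIcc hv⟩
  · exact (isPreconnected_uIcc.prod isPreconnected_singleton).union (q.1, 0)
      ⟨right_mem_uIcc, rfl⟩ ⟨rfl, left_mem_Icc.2 hq2⟩
      (isPreconnected_singleton.prod isPreconnected_Icc)

variable (C) in
lemma isConnected_space : IsConnected C.space := by
  have hzero : ((0, 0) : ℝ × ℝ) ∈ C.space := mem_space_of_base (by simp)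
  have hball : C.space ⊆ Metric.ball (0, 0) 3 := by
    intro p hp
    obtain ⟨⟨hx0, hx2⟩, hy0, hy1⟩ := subcomb_subset hp
    rw [← ball_prod_same, mem_prod, Real.ball_eq_Ioo]
    constructor <;> constructor <;> linarith
  refine ⟨⟨_, hzero⟩, ?_⟩
  rw [← inter_eq_left.2 hball]
  exact isPreconnected_space_inter_ball_of_base hzero rfl 3

instance : LocallyConnectedSpace C.space := by
  refine locallyConnectedSpace_of_isPreconnected_inter_ball fun p hp => ?_
  rcases (snd_nonneg hp).eq_or_lt with hp2 | hp2
  · exact ⟨1, one_pos, fun r _ => isPreconnected_space_inter_ball_of_base hp hp2.symm r⟩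
  obtain ⟨i, R, hR, hball⟩ := exists_ball_inter_space_subset hp hp2
  refine ⟨R, hR, fun r hr => ?_⟩
  have htooth : C.space ∩ Metric.ball p r
      = {C.pos i} ×ˢ Icc 0 (C.height i) ∩ Metric.ball p r := by
    refine subset_antisymm (fun q hq => ?_) (inter_subset_inter_left _ ?_)
    · exact ⟨hball ⟨hq.1, Metric.ball_subset_ball hr hq.2⟩, hq.2⟩
    · rintro q ⟨hx, hy⟩
      exact mem_space.2 (.inr ⟨i, hx, hy⟩)
  rw [htooth]
  exact (((convex_singleton _).prod (convex_Icc _ _)).inter (convex_ball p r)).isPreconnected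

lemma countable_index (C : Comb ι) : Countable ι := by
  have hcover : (univ : Set ι) ⊆ ⋃ n : ℕ, {i | 1 / (n + 1 : ℝ) ≤ C.height i} := by
    intro i _
    obtain ⟨n, hn⟩ := exists_nat_one_div_lt (C.height_pos i)
    exact mem_iUnion.2 ⟨n, hn.le⟩
  exact countable_univ_iff.1 ((countable_iUnion fun n =>
    (C.finite_le_height _ Nat.one_div_pos_of_nat).countable).mono hcover)

/-- A base point that is not the foot of a tooth cuts the comb into its left and right parts. -/
lemma exists_separates_of_fst_lt {p q : C.space} (hpq : p.1.1 < q.1.1) :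
    ∃ z, Separates z p q := by
  have := C.countable_index
  obtain ⟨c, hc, hpc, hcq⟩ :=
    ((countable_range C.pos).dense_compl ℝ).exists_between hpq
  have hc2 : c ∈ Icc (0 : ℝ) 2 := ⟨(fst_mem p.2).1.trans hpc.le, hcq.le.trans (fst_mem q.2).2⟩
  refine ⟨⟨(c, 0), mem_space_of_base hc2⟩, {x | x.1.1 < c}, {x | c < x.1.1},
    isOpen_lt (by fun_prop) continuous_const, isOpen_lt continuous_const (by fun_prop),
    disjoint_left.2 fun x (hx : x.1.1 < c) hx' => hx.asymm hx', ?_, hpc, hcq⟩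
  have snd_eq_zero : ∀ x ∈ C.space, x.1 = c → x.2 = 0 := by
    intro x hx hxc
    by_contra hne
    obtain ⟨i, hi, -⟩ := exists_tooth hx ((snd_nonneg hx).lt_of_ne' hne)
    exact hc ⟨i, hi ▸ hxc⟩
  ext x
  simp only [mem_union, mem_ofPred_eq, mem_compl_iff, mem_singleton_iff, Subtype.ext_iff,
    Prod.ext_iff]
  have := snd_eq_zero x x.2
  grind

/-- The part of a tooth above one of its interior points is clopen in the complement of that
point. -/
lemma exists_separates_of_snd_lt {p q : C.space} (hpq : p.1.2 < q.1.2) :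
    ∃ z, Separates z p q := by
  obtain ⟨c, hpc, hcq⟩ := exists_between hpq
  have hc : 0 < c := (snd_nonneg p.2).trans_lt hpc
  obtain ⟨i, hi, -⟩ := exists_tooth q.2 (hc.trans hcq)
  have mem_tooth : ∀ x : C.space, c ≤ x.1.2 → (x.1 ∉ C.subcomb {i}ᶜ ↔ x.1.1 = q.1.1) := by
    intro x hx
    rw [mem_subcomb_compl_singleton x.2 (hc.trans_le hx), hi, not_not]
  refine ⟨⟨(q.1.1, c), mk_mem_space_of_le q.2 ⟨hc.le, hcq.le⟩⟩,
    {x | x.1.1 = q.1.1 ∧ c ≤ x.1.2}ᶜ, {x | c < x.1.2} ∩ (Subtype.val ⁻¹' C.subcomb {i}ᶜ)ᶜ,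
    ?_, ?_, ?_, ?_, fun h => h.2.not_gt hpc, hcq, (mem_tooth q hcq.le).2 rfl⟩
  · rw [isOpen_compl_iff]
    exact (isClosed_eq continuous_subtype_val.fst continuous_const).inter
      (isClosed_le continuous_const continuous_subtype_val.snd)
  · exact (isOpen_lt continuous_const continuous_subtype_val.snd).inter
      ((C.isClosed_subcomb {i}ᶜ).preimage continuous_subtype_val).isOpen_compl
  · exact disjoint_left.2 fun x hx hx' => hx ⟨(mem_tooth x hx'.1.le).1 hx'.2, hx'.1.le⟩
  · ext x
    simp only [mem_union, mem_inter_iff, mem_ofPred_eq, mem_compl_iff, mem_preimage,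
      mem_singleton_iff, Subtype.ext_iff, Prod.ext_iff]
    have := mem_tooth x
    grind

lemma exists_separates {p q : C.space} (hpq : p ≠ q) : ∃ z, Separates z p q := by
  rcases lt_trichotomy p.1.2 q.1.2 with hy | hy | hy
  · exact exists_separates_of_snd_lt hy
  · rcases lt_trichotomy p.1.1 q.1.1 with hx | hx | hx
    · exact exists_separates_of_fst_lt hx
    · exact absurd (Subtype.ext (Prod.ext hx hy)) hpq
    · exact (exists_separates_of_fst_lt hx).imp fun _ => Separates.symm
  · exact (exists_separates_of_snd_lt hy).imp fun _ => Separates.symm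

variable (C) in
theorem isDendrite_space : IsDendrite C.space :=
  ⟨isCompact_iff_compactSpace.1 C.isCompact_space,
    isConnected_iff_connectedSpace.1 C.isConnected_space, inferInstance,
    not_isSimpleClosedCurve_of_separates fun _ _ => exists_separates⟩

end Comb

@[elab_as_elim]
lemma Comb.space_induction {ι : Type*} {C : Comb ι} {P : (p : ℝ × ℝ) → p ∈ C.space → Prop}
    (base : ∀ x (hx : x ∈ Icc (0 : ℝ) 2), P (x, 0) (mem_space_of_base hx))
    (tooth : ∀ i y (hy : y ∈ Icc 0 (C.height i)), P (C.pos i, y) (mem_space_of_tooth hy))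
    {p : ℝ × ℝ} (hp : p ∈ C.space) : P p hp := by
  obtain ⟨x, y⟩ := p
  rcases mem_space.1 hp with ⟨hx, rfl⟩ | ⟨i, rfl, hy⟩
  exacts [base x hx, tooth i y hy]

/-- A comb together with a self-map `shift` of its teeth which preserves heights and has finite
orbits. It encodes the self-map `CombMap.map` of the comb. A tooth may be shifted only as far as its
height allows, which makes this map continuous. -/
structure CombMap (ι : Type*) extends Comb ι where
  shift : ι → ι
  height_shift : ∀ i, height (shift i) = height i
  abs_pos_shift_sub_le : ∀ i, |pos (shift i) - pos i| ≤ 2 * height i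
  mem_periodicPts_shift : ∀ i, i ∈ periodicPts shift

namespace CombMap

variable {ι : Type*} (C : CombMap ι)

/-- The map on the tooth `i`, as a function of the height `y`: the upper half of the tooth is
stretched over the tooth `shift i`, and the lower half over the part of the base in between. -/
noncomputable def toothMap (i : ι) (y : ℝ) : ℝ × ℝ :=
  (C.pos i + min 1 (2 * y / C.height i) * (C.pos (C.shift i) - C.pos i),
    max 0 (2 * y - C.height i))

/-- The map of a comb in coordinates of the plane: `toothMap` on the teeth, the identity on the
base. -/
noncomputable def planeMap (p : ℝ × ℝ) : ℝ × ℝ :=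
  extend C.pos C.toothMap (fun x _ => (x, 0)) p.1 p.2

variable {C} {i : ι} {y : ℝ}

lemma planeMap_tooth (i : ι) (y : ℝ) : C.planeMap (C.pos i, y) = C.toothMap i y := by
  rw [planeMap, C.pos_injective.extend_apply]

lemma toothMap_zero (i : ι) : C.toothMap i 0 = (C.pos i, 0) := by
  simp [toothMap, (C.height_pos i).le]

lemma planeMap_base (x : ℝ) : C.planeMap (x, 0) = (x, 0) := by
  by_cases hx : ∃ i, C.pos i = x
  · obtain ⟨i, rfl⟩ := hx
    rw [planeMap_tooth, toothMap_zero]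
  · simp only [planeMap, extend_apply' _ _ _ hx]

lemma toothMap_of_height_le (hy : C.height i ≤ 2 * y) :
    C.toothMap i y = (C.pos (C.shift i), 2 * y - C.height i) := by
  have hratio : 1 ≤ 2 * y / C.height i := (one_le_div (C.height_pos i)).2 hy
  simp [toothMap, hratio, hy]

lemma snd_toothMap_of_le_height (hy : 2 * y ≤ C.height i) : (C.toothMap i y).2 = 0 :=
  max_eq_left (by linarith)

lemma toothMap_mem_space (hy : y ∈ Icc 0 (C.height i)) : C.toothMap i y ∈ C.space := by
  rcases le_total (2 * y) (C.height i) with hlow | hhigh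
  · refine Comb.mem_space.2 (.inl ⟨?_, snd_toothMap_of_le_height hlow⟩)
    have hratio : 0 ≤ 2 * y / C.height i := div_nonneg (by linarith [hy.1]) (C.height_pos i).le
    have hmem := (convex_Icc (0 : ℝ) 2).add_smul_sub_mem (C.pos_mem i) (C.pos_mem (C.shift i))
      ⟨le_min zero_le_one hratio, min_le_left _ _⟩
    exact hmem
  · rw [toothMap_of_height_le hhigh]
    refine Comb.mem_space_of_tooth ⟨by linarith, ?_⟩
    rw [C.height_shift]
    linarith [hy.2]

lemma dist_toothMap_le (hy : y ∈ Icc 0 (C.height i)) :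
    dist (C.toothMap i y) (C.pos i, y) ≤ 4 * y := by
  have hh := C.height_pos i
  have hratio : 0 ≤ 2 * y / C.height i := div_nonneg (by linarith [hy.1]) hh.le
  refine max_le ?_ ?_
  · calc dist (C.toothMap i y).1 (C.pos i)
      _ = min 1 (2 * y / C.height i) * |C.pos (C.shift i) - C.pos i| := by
        rw [Real.dist_eq, toothMap, add_sub_cancel_left, abs_mul,
          abs_of_nonneg (le_min zero_le_one hratio)]
      _ ≤ 2 * y / C.height i * (2 * C.height i) := by
        gcongr
        exacts [min_le_right _ _, C.abs_pos_shift_sub_le i]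
      _ = 4 * y := by field_simp; ring
  · rw [Real.dist_eq, toothMap, abs_le]
    constructor <;> rcases max_cases 0 (2 * y - C.height i) with h | h <;> linarith [hy.1, hy.2]

lemma snd_toothMap_le (hy : y ∈ Icc 0 (C.height i)) : (C.toothMap i y).2 ≤ y :=
  max_le hy.1 (by linarith [hy.2])

variable (C) in
lemma mapsTo_planeMap : MapsTo C.planeMap C.space C.space := fun _ hp => by
  induction hp using Comb.space_induction with
  | base x hx =>
    rw [planeMap_base]
    exact Comb.mem_space_of_base hx
  | tooth i y hy => exact planeMap_tooth i y ▸ toothMap_mem_space hy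

lemma dist_planeMap_le {p : ℝ × ℝ} (hp : p ∈ C.space) : dist (C.planeMap p) p ≤ 4 * p.2 := by
  induction hp using Comb.space_induction with
  | base x => simp [planeMap_base]
  | tooth i y hy => exact planeMap_tooth i y ▸ dist_toothMap_le hy

variable (C) in
lemma continuousOn_planeMap : ContinuousOn C.planeMap C.space := by
  intro p hp
  rcases (Comb.snd_nonneg hp).eq_or_lt with hp2 | hp2
  · obtain ⟨x, y⟩ := p
    obtain rfl : 0 = y := hp2
    rw [ContinuousWithinAt, planeMap_base, tendsto_iff_dist_tendsto_zero]
    have hbound : ∀ᶠ q in 𝓝[C.space] (x, 0), dist (C.planeMap q) (x, 0)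
        ≤ 4 * q.2 + dist q (x, 0) := by
      filter_upwards [self_mem_nhdsWithin] with q hq
      exact (dist_triangle _ q _).trans (by gcongr; exact dist_planeMap_le hq)
    refine squeeze_zero' (.of_forall fun _ => dist_nonneg) hbound
      (tendsto_nhdsWithin_of_tendsto_nhds ?_)
    have hcont : Continuous fun q : ℝ × ℝ => 4 * q.2 + dist q (x, 0) := by fun_prop
    simpa using hcont.tendsto (x, 0)
  · obtain ⟨i, R, hR, hball⟩ := Comb.exists_ball_inter_space_subset hp hp2
    have heq : ∀ q ∈ C.space ∩ Metric.ball p R, C.planeMap q = C.toothMap i q.2 := by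
      intro q hq
      rw [← planeMap_tooth, ← show q.1 = C.pos i from (hball hq).1]
    have hcont : Continuous fun q : ℝ × ℝ => C.toothMap i q.2 := by
      unfold toothMap
      fun_prop
    refine hcont.continuousWithinAt.congr_of_eventuallyEq ?_
      (heq p ⟨hp, Metric.mem_ball_self hR⟩)
    filter_upwards [inter_mem_nhdsWithin C.space (Metric.ball_mem_nhds p hR)] using heq

variable (C) in
/-- The self-map of the comb encoded by `C`. -/
noncomputable def map : C.space → C.space := C.mapsTo_planeMap.restrict C.planeMap C.space C.space

variable (C) in
lemma continuous_map : Continuous C.map := C.continuousOn_planeMap.mapsToRestrict C.mapsTo_planeMap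

variable {p : C.space} {n : ℕ}

lemma val_iterate_map (n : ℕ) (p : C.space) : (C.map^[n] p).1 = C.planeMap^[n] p :=
  C.mapsTo_planeMap.coe_iterate_restrict p n

lemma snd_map_le (p : C.space) : (C.map p).1.2 ≤ p.1.2 := by
  obtain ⟨p, hp⟩ := p
  change (C.planeMap p).2 ≤ p.2
  induction hp using Comb.space_induction with
  | base x => rw [planeMap_base]
  | tooth i y hy => exact planeMap_tooth i y ▸ snd_toothMap_le hy

lemma isFixedPt_map_of_snd_eq_zero (hp : p.1.2 = 0) : IsFixedPt C.map p := by
  obtain ⟨⟨x, y⟩, hp'⟩ := p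
  obtain rfl : y = 0 := hp
  exact Subtype.ext (planeMap_base x)

lemma dist_iterate_map_le (n : ℕ) (p : C.space) : dist (C.map^[n] p) p ≤ n * (4 * p.1.2) := by
  induction n with
  | zero => simp
  | succ n ih =>
    have hstep : dist (C.map (C.map^[n] p)) (C.map^[n] p) ≤ 4 * p.1.2 :=
      (dist_planeMap_le (C.map^[n] p).2).trans
        (by gcongr; exact iterate_le_of_map_le (φ := fun p : C.space => p.1.2) snd_map_le n p)
    rw [iterate_succ_apply']
    refine (dist_triangle _ (C.map^[n] p) _).trans ?_
    push_cast
    linarith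

lemma height_iterate_shift (n : ℕ) (i : ι) : C.height (C.shift^[n] i) = C.height i := by
  induction n with
  | zero => rfl
  | succ n ih => rw [iterate_succ_apply', C.height_shift, ih]

variable (C) in
/-- The tip of a tooth, as a point of the comb. -/
def tip (i : ι) : C.space :=
  ⟨(C.pos i, C.height i), Comb.mem_space_of_tooth (right_mem_Icc.2 (C.height_pos i).le)⟩

lemma semiconj_tip : Semiconj C.tip C.shift C.map := by
  intro i
  have hy : C.height i ≤ 2 * C.height i := by linarith [C.height_pos i]
  refine Subtype.ext (Eq.symm ?_)
  calc C.planeMap (C.pos i, C.height i)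
    _ = (C.pos (C.shift i), 2 * C.height i - C.height i) := by
      rw [planeMap_tooth, toothMap_of_height_le hy]
    _ = (C.pos (C.shift i), C.height (C.shift i)) := by rw [C.height_shift]; ring_nf

lemma iterate_map_tip (n : ℕ) (i : ι) : C.map^[n] (C.tip i) = C.tip (C.shift^[n] i) :=
  (semiconj_tip.iterate_right n i).symm

lemma tip_mem_periodicPts (i : ι) : C.tip i ∈ periodicPts C.map := by
  obtain ⟨n, hn, hi⟩ := C.mem_periodicPts_shift i
  exact ⟨n, hn, hi.map semiconj_tip⟩

lemma mem_periodicPts_of_snd_map_eq (hp : (C.map p).1.2 = p.1.2) : p ∈ periodicPts C.map := by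
  rcases (Comb.snd_nonneg p.2).eq_or_lt with hp2 | hp2
  · exact ⟨1, one_pos, isFixedPt_map_of_snd_eq_zero hp2.symm⟩
  obtain ⟨⟨x, y⟩, hxy⟩ := p
  obtain ⟨i, hx, -⟩ := Comb.exists_tooth hxy hp2
  obtain rfl : x = C.pos i := hx
  have hmap : max 0 (2 * y - C.height i) = y :=
    (congrArg Prod.snd (planeMap_tooth i y)).symm.trans hp
  have htip : y = C.height i := by
    rcases max_cases 0 (2 * y - C.height i) with h | h <;> linarith
  subst htip
  exact tip_mem_periodicPts i

variable (C) in
lemma nonWanderingSet_map : nonWanderingSet C.map = periodicPts C.map := by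
  refine subset_antisymm (fun p hp => mem_periodicPts_of_snd_map_eq ?_)
    periodicPts_subset_nonWanderingSet
  exact nonWanderingSet_subset_of_map_le C.continuous_map (φ := fun p : C.space => p.1.2)
    (by fun_prop) snd_map_le hp

/-- The gap below the tip doubles as long as it fits into the tooth. -/
lemma iterate_planeMap_of_le {g : ℝ} (hg : 0 ≤ g) (hn : 2 ^ n * g ≤ C.height i) :
    C.planeMap^[n] (C.pos i, C.height i - g)
      = (C.pos (C.shift^[n] i), C.height i - 2 ^ n * g) := by
  induction n with
  | zero => simp
  | succ n ih =>
    rw [pow_succ] at hn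
    have hgap : 0 ≤ 2 ^ n * g := by positivity
    have hhigh : C.height (C.shift^[n] i) ≤ 2 * (C.height i - 2 ^ n * g) := by
      rw [height_iterate_shift]
      linarith
    rw [iterate_succ_apply', ih (by linarith), planeMap_tooth, toothMap_of_height_le hhigh,
      height_iterate_shift, iterate_succ_apply']
    ring_nf

lemma snd_iterate_planeMap_of_le {g : ℝ} (hg : g ∈ Icc 0 (C.height i))
    (hn : C.height i ≤ 2 ^ n * g) :
    (C.planeMap^[n] (C.pos i, C.height i - g)).2 = 0 := by
  induction n with
  | zero =>
    rw [pow_zero, one_mul] at hn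
    simp [le_antisymm hg.2 hn]
  | succ n ih =>
    rw [iterate_succ_apply']
    rcases le_total (2 ^ n * g) (C.height i) with hle | hle
    · rw [iterate_planeMap_of_le hg.1 hle, planeMap_tooth]
      refine snd_toothMap_of_le_height ?_
      rw [height_iterate_shift]
      rw [pow_succ] at hn
      linarith
    · have hbase := planeMap_base (C := C) (C.planeMap^[n] (C.pos i, C.height i - g)).1
      rw [← ih hle, Prod.mk.eta] at hbase
      rw [hbase, ih hle]

lemma exists_iterate_map_mem_periodicPts (p : C.space) :
    ∃ n, C.map^[n] p ∈ periodicPts C.map := by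
  obtain ⟨p, hp⟩ := p
  induction hp using Comb.space_induction with
  | base x hx => exact ⟨0, 1, one_pos, isFixedPt_map_of_snd_eq_zero rfl⟩
  | tooth i y hy =>
    rcases hy.2.eq_or_lt with rfl | hlt
    · exact ⟨0, tip_mem_periodicPts i⟩
    obtain ⟨n, hn⟩ := pow_unbounded_of_one_lt (C.height i / (C.height i - y)) one_lt_two
    have hgap : C.height i ≤ 2 ^ n * (C.height i - y) :=
      ((div_lt_iff₀ (sub_pos.2 hlt)).1 hn).le
    refine ⟨n, 1, one_pos, isFixedPt_map_of_snd_eq_zero ?_⟩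
    rw [val_iterate_map]
    simpa only [sub_sub_cancel] using
      snd_iterate_planeMap_of_le ⟨sub_nonneg.2 hy.2, by linarith [hy.1]⟩ hgap

lemma orbitsShadowed_low {ε : ℝ} {Z : Finset C.space} (hZ : ∀ p, ∃ z ∈ Z, dist p z < ε / 2)
    {k : ℕ} (hk : 0 < k) (n : ℕ) :
    OrbitsShadowed C.map {p | p.1.2 ≤ ε / (8 * k)} ε n (Z.card ^ (n / k + 1)) := by
  refine .of_dist_iterate_le hZ (fun p hp => (snd_map_le p).trans hp) hk (fun p hp i hi => ?_) n
  have hp0 := Comb.snd_nonneg p.2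
  calc dist (C.map^[i] p) p
    _ ≤ i * (4 * p.1.2) := dist_iterate_map_le i p
    _ ≤ k * (4 * (ε / (8 * k))) := by gcongr; exact hp
    _ = ε / 2 := by field_simp; ring

/-- On a tooth, orbits follow the orbit of the tip until the gap to it reaches `ε`. From then on
the doubling of the gap takes them to the base, hence to a fixed point, in bounded time. -/
lemma orbitsShadowed_tooth {ε : ℝ} {Z : Finset C.space} (hZ : ∀ p, ∃ z ∈ Z, dist p z < ε) {m : ℕ}
    (hm : 1 ≤ 2 ^ m * ε) (i : ι) (n : ℕ) :
    OrbitsShadowed C.map {p | p.1.1 = C.pos i ∧ p.1.2 ∈ Icc 0 (C.height i)} ε n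
      ((n + 1) * Z.card ^ (m + 1)) := by
  refine .of_follow_then_freeze hZ (fun n => C.map^[n] (C.tip i)) m ?_ n
  rintro ⟨⟨x, y⟩, hxy⟩ ⟨hx, hy⟩ T hT j hj
  obtain rfl : x = C.pos i := hx
  obtain ⟨g, rfl⟩ : ∃ g, y = C.height i - g := ⟨C.height i - y, by ring⟩
  have hg : g ∈ Icc 0 (C.height i) := ⟨by linarith [hy.2], by linarith [hy.1]⟩
  have hgap : C.height i ≤ 2 ^ (T + m) * g := by
    rcases le_total (2 ^ T * g) (C.height i) with hle | hle
    · have hTg : dist (C.map^[T] ⟨(C.pos i, C.height i - g), hxy⟩) (C.map^[T] (C.tip i))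
          = 2 ^ T * g := by
        have hnonneg : 0 ≤ 2 ^ T * g := mul_nonneg (by positivity) hg.1
        rw [Subtype.dist_eq, val_iterate_map, iterate_planeMap_of_le hg.1 hle, iterate_map_tip]
        simp [tip, Prod.dist_eq, height_iterate_shift, abs_of_nonneg hg.1, hnonneg]
      calc C.height i ≤ 2 ^ m * ε := (C.height_le_one i).trans hm
        _ ≤ 2 ^ m * (2 ^ T * g) := by gcongr; exact hTg ▸ hT
        _ = 2 ^ (T + m) * g := by ring
    · refine hle.trans ?_
      gcongr
      exacts [hg.1, one_le_two, Nat.le_add_right T m]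
  obtain ⟨l, rfl⟩ := Nat.exists_eq_add_of_le' hj
  rw [iterate_add_apply]
  refine iterate_fixed (isFixedPt_map_of_snd_eq_zero ?_) l
  rw [val_iterate_map]
  exact snd_iterate_planeMap_of_le hg hgap

variable (C) in
lemma topEntropy_map : topEntropy C.map = 0 := by
  have := isCompact_iff_compactSpace.1 C.isCompact_space
  refine topEntropy_eq_zero_of_orbitsShadowed fun ε hε => ?_
  obtain ⟨Z, -, hZfin, hZ⟩ := finite_cover_balls_of_compact (isCompact_univ (X := C.space))
    (half_pos hε)
  lift Z to Finset C.space using hZfin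
  have hnet : ∀ p, ∃ z ∈ Z, dist p z < ε / 2 := fun p => by
    simpa only [mem_iUnion₂, Metric.mem_ball, exists_prop, Finset.mem_coe] using hZ (mem_univ p)
  have hnet' : ∀ p, ∃ z ∈ Z, dist p z < ε := fun p =>
    (hnet p).imp fun z hz => ⟨hz.1, hz.2.trans (half_lt_self hε)⟩
  have hcard : 0 < Z.card := by
    obtain ⟨z, hz, -⟩ := hnet ⟨(0, 0), Comb.mem_space_of_base (by simp)⟩
    exact Finset.card_pos.2 ⟨z, hz⟩
  obtain ⟨m, hm⟩ := pow_unbounded_of_one_lt (1 / ε) one_lt_two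
  refine ⟨Z.card, hcard, fun k hk => ?_⟩
  have hδ : 0 < ε / (8 * k) := by positivity
  set F := (C.finite_le_height _ hδ).toFinset
  refine ⟨Z.card + F.card * Z.card ^ (m + 1), by positivity, fun n => ?_⟩
  refine ((orbitsShadowed_low hnet hk n).union (.biUnion F fun i _ =>
    orbitsShadowed_tooth hnet' ((div_lt_iff₀ hε).1 hm).le i n)).mono (fun p _ => ?_) ?_
  · refine (le_or_gt p.1.2 (ε / (8 * k))).imp id fun hp => ?_
    obtain ⟨i, hx, hi⟩ := Comb.exists_tooth p.2 (hδ.trans hp)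
    exact mem_biUnion (by simpa [F] using hp.le.trans hi) ⟨hx, Comb.snd_nonneg p.2, hi⟩
  · have hlow : Z.card ^ (n / k + 1) ≤ Z.card * (n + 1) * Z.card ^ (n / k) := by
      rw [pow_succ']
      gcongr
      exact Nat.le_mul_of_pos_right _ n.succ_pos
    have hhigh : F.card * ((n + 1) * Z.card ^ (m + 1))
        ≤ F.card * Z.card ^ (m + 1) * (n + 1) * Z.card ^ (n / k) := by
      refine le_trans (le_of_eq (by ring)) (Nat.le_mul_of_pos_right _ (by positivity))
    exact (add_le_add hlow hhigh).trans_eq (by ring)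

variable (C) in
/-- Every word of length `m` is the itinerary of some tooth at the times `2 ^ (m + j)`, the letter
`true` standing for the part `[0, 1/3]` of the base and `false` for the part `[2/3, 2]`. The times
of words of length `m` fill the block of exponents from `m` to `2m - 1`, so that a single time
sequence serves all lengths at half the rate. -/
def RealizesWords (m : ℕ) : Prop :=
  ∀ w : Fin m → Bool, ∃ i, ∀ j : Fin m,
    if w j then C.pos (C.shift^[2 ^ (m + j : ℕ)] i) ≤ 1 / 3
    else 2 / 3 ≤ C.pos (C.shift^[2 ^ (m + j : ℕ)] i)

lemma supSeqEntropyOn_map_pos {Y : Set C.space} (hY : ∀ i, C.tip i ∈ Y)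
    (h : ∃ᶠ m in atTop, C.RealizesWords m) : 0 < supSeqEntropyOn C.map Y := by
  have hleft : IsOpen {p : C.space | p.1.1 < 2 / 3} := isOpen_lt (by fun_prop) continuous_const
  have hright : IsOpen {p : C.space | 1 / 3 < p.1.1} := isOpen_lt continuous_const (by fun_prop)
  have hmono : StrictMono fun n : ℕ => 2 ^ n := pow_right_strictMono₀ one_lt_two
  refine supSeqEntropyOn_pos hmono le_rfl hleft hright ?_ (h.mono fun m hm w => ?_)
  · refine eq_univ_of_forall fun p => (lt_or_ge p.1.1 (2 / 3)).imp id fun hp => ?_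
    exact lt_of_lt_of_le (by norm_num) hp
  · obtain ⟨i, hi⟩ := hm w
    refine ⟨C.tip i, hY i, fun j => ?_⟩
    have hij := hi j
    rw [iterate_map_tip]
    cases hw : w j <;> rw [hw] at hij
    exacts [hij.not_gt, hij.not_gt]

end CombMap

/-- Distinct translates by multiples of `√2` of the rationals are disjoint. -/
lemma exists_injective_mem_Ioo {ι : Type*} [Countable ι] {u v : ι → ℝ} (huv : ∀ i, u i < v i) :
    ∃ b : ι → ℝ, Injective b ∧ ∀ i, b i ∈ Ioo (u i) (v i) := by
  obtain ⟨e, he⟩ := exists_injective_nat ι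
  choose q hqu hqv using fun i => exists_rat_btwn (sub_lt_sub_right (huv i) (e i * √2))
  refine ⟨fun i => q i + e i * √2, fun i j hij => he ?_, fun i => ⟨by linarith [hqu i],
    by linarith [hqv i]⟩⟩
  by_contra hne
  have hne' : (e i : ℤ) - e j ≠ 0 := by rwa [sub_ne_zero, Nat.cast_inj.ne]
  refine (irrational_sqrt_two.intCast_mul hne').ne_rat (q j - q i) ?_
  push_cast
  linarith

lemma two_pow_le_abs_two_pow_sub {m j k : ℕ} (hjk : j ≠ k) :
    (2 : ℝ) ^ m ≤ |2 ^ (m + j) - 2 ^ (m + k)| := by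
  wlog h : j < k generalizing j k
  · rw [abs_sub_comm]
    exact this hjk.symm (hjk.symm.lt_of_le (not_lt.1 h))
  have hle : (2 : ℝ) ^ (m + j) * 2 ≤ 2 ^ (m + k) := by
    rw [← pow_succ]
    exact pow_le_pow_right₀ one_le_two (by lia)
  have hmj : (2 : ℝ) ^ m ≤ 2 ^ (m + j) := pow_le_pow_right₀ one_le_two (by lia)
  rw [abs_sub_comm]
  exact le_trans (by linarith) (le_abs_self _)

section Profile

variable {m : ℕ} (w : Fin m → Bool)

/-- A bump function with peaks of height `1` and width `m + 1` at the times `2 ^ (m + j)` with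
`w j = false`: a slow motion in `[0, 1]` which encodes the word `w`. -/
noncomputable def profile (x : ℝ) : ℝ :=
  thickenedIndicator (Nat.cast_add_one_pos (α := ℝ) m)
    ((fun j : Fin m => (2 : ℝ) ^ (m + j : ℕ)) '' {j | w j = false}) x

lemma profile_mem_Icc (x : ℝ) : profile w x ∈ Icc (0 : ℝ) 1 :=
  ⟨NNReal.coe_nonneg _, thickenedIndicator_le_one _ _ x⟩

lemma abs_profile_sub_le (x y : ℝ) : |profile w x - profile w y| ≤ 1 / (m + 1) * |x - y| := by
  have h := (lipschitzWith_thickenedIndicator (Nat.cast_add_one_pos (α := ℝ) m)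
    ((fun j : Fin m => (2 : ℝ) ^ (m + j : ℕ)) '' {j | w j = false})).dist_le_mul x y
  simpa [NNReal.dist_eq, Real.dist_eq, profile] using h

lemma profile_eq_one {j : Fin m} (hj : w j = false) : profile w (2 ^ (m + j : ℕ)) = 1 := by
  have hpeak : (2 : ℝ) ^ (m + j : ℕ) ∈
      (fun j : Fin m => (2 : ℝ) ^ (m + j : ℕ)) '' {j | w j = false} := ⟨j, hj, rfl⟩
  rw [profile, thickenedIndicator_one _ _ hpeak, NNReal.coe_one]

lemma profile_eq_zero {x : ℝ} (hx : ∀ j, w j = false → 2 ^ m ≤ |x - 2 ^ (m + j : ℕ)|) :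
    profile w x = 0 := by
  rw [profile, thickenedIndicator_zero, NNReal.coe_zero]
  rw [Metric.mem_thickening_iff]
  rintro ⟨_, ⟨j, hj, rfl⟩, hlt⟩
  have hm : (m + 1 : ℝ) ≤ 2 ^ m := by exact_mod_cast Nat.lt_two_pow_self
  exact absurd hlt (not_lt.2 (hm.trans (hx j hj)))

lemma profile_eq_zero_of_true {j : Fin m} (hj : w j = true) :
    profile w (2 ^ (m + j : ℕ)) = 0 := by
  refine profile_eq_zero w fun k hk => two_pow_le_abs_two_pow_sub fun hjk => ?_
  rw [Fin.ext hjk, hk] at hj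
  exact Bool.false_ne_true hj

lemma profile_zero : profile w 0 = 0 := by
  refine profile_eq_zero w fun j _ => ?_
  rw [zero_sub, abs_neg, abs_of_pos (by positivity)]
  exact pow_le_pow_right₀ one_le_two (by lia)

lemma profile_four_pow : profile w (4 ^ m) = 0 := by
  refine profile_eq_zero w fun j _ => ?_
  have hfour : (4 : ℝ) ^ m = 2 ^ (m + m) := by rw [← two_mul, pow_mul]; norm_num
  rw [hfour]
  exact two_pow_le_abs_two_pow_sub j.2.ne'

lemma profile_val_add_one (t : ZMod (4 ^ m)) :
    profile w (t + 1).val = profile w (t.val + 1) := by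
  have hval : (t + 1).val = (t.val + 1) % 4 ^ m := by
    rw [← ZMod.val_natCast, Nat.cast_succ, ZMod.natCast_zmod_val]
  rcases (Nat.add_one_le_of_lt t.val_lt).lt_or_eq with hlt | hwrap
  · rw [hval, Nat.mod_eq_of_lt hlt, Nat.cast_succ]
  · have hcast : (t.val + 1 : ℝ) = 4 ^ m := by exact_mod_cast hwrap
    rw [hval, hwrap, Nat.mod_self, hcast, Nat.cast_zero, profile_zero, profile_four_pow]

end Profile

/-- The teeth of the counterexample: for each word `w` of length `m` a cycle of `4 ^ m` teeth of
height `1 / (m + 1)`, whose positions follow the profile of `w` through one period. -/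
abbrev ToothIndex : Type := Σ m : ℕ, (Fin m → Bool) × ZMod (4 ^ m)

namespace ToothIndex

/-- The shift of each cycle of teeth by one step. -/
def next (i : ToothIndex) : ToothIndex := ⟨i.1, i.2.1, i.2.2 + 1⟩

/-- The height of a tooth. -/
noncomputable def height (i : ToothIndex) : ℝ := 1 / (i.1 + 1)

/-- The approximate position of a tooth, exact positions being chosen above it to be distinct. -/
noncomputable def approxPos (i : ToothIndex) : ℝ := profile i.2.1 i.2.2.val

lemma next_iterate (n m : ℕ) (w : Fin m → Bool) (t : ZMod (4 ^ m)) :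
    next^[n] ⟨m, w, t⟩ = ⟨m, w, t + n⟩ := by
  induction n with
  | zero => simp
  | succ n ih => rw [iterate_succ_apply', ih, next, Nat.cast_succ, add_assoc]

lemma mem_periodicPts_next (i : ToothIndex) : i ∈ periodicPts next := by
  obtain ⟨m, w, t⟩ := i
  refine mk_mem_periodicPts (n := 4 ^ m) (by positivity) ?_
  rw [IsPeriodicPt, IsFixedPt, next_iterate, ZMod.natCast_self, add_zero]

lemma height_pos (i : ToothIndex) : 0 < i.height := Nat.one_div_pos_of_nat

lemma height_le_one (i : ToothIndex) : i.height ≤ 1 := by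
  simpa [height] using Nat.one_div_le_one_div (α := ℝ) (Nat.zero_le i.1)

lemma finite_le_height (δ : ℝ) (hδ : 0 < δ) : {i : ToothIndex | δ ≤ i.height}.Finite := by
  obtain ⟨N, hN⟩ := exists_nat_one_div_lt hδ
  have hfinite : (Sigma.fst ⁻¹' Iic N : Set ToothIndex).Finite :=
    (finite_Iic N).preimage' fun m _ => by
      rw [← range_sigmaMk]
      exact finite_range (Sigma.mk m)
  refine hfinite.subset fun i hi => ?_
  by_contra hlt
  exact absurd (hN.trans_le hi) (not_lt.2 (Nat.one_div_le_one_div (not_le.1 hlt).le))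

lemma abs_approxPos_next_sub_le (i : ToothIndex) :
    |approxPos i.next - approxPos i| ≤ i.height := by
  obtain ⟨m, w, t⟩ := i
  have h := abs_profile_sub_le w (t.val + 1) t.val
  rwa [← profile_val_add_one, add_sub_cancel_left, abs_one, mul_one] at h

lemma approxPos_next_iterate {m n : ℕ} (w : Fin m → Bool) (hn : n < 4 ^ m) :
    approxPos (next^[n] ⟨m, w, 0⟩) = profile w n := by
  rw [next_iterate]
  simp only [approxPos, zero_add, ZMod.val_natCast_of_lt hn]

lemma approxPos_next_iterate_two_pow {m : ℕ} (w : Fin m → Bool) (j : Fin m) :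
    approxPos (next^[2 ^ (m + j : ℕ)] ⟨m, w, 0⟩) = profile w (2 ^ (m + j : ℕ)) := by
  have hlt : 2 ^ (m + j : ℕ) < 4 ^ m := by
    rw [show 4 = 2 ^ 2 from rfl, ← pow_mul]
    exact Nat.pow_lt_pow_right one_lt_two (by lia)
  rw [approxPos_next_iterate w hlt, Nat.cast_pow, Nat.cast_ofNat]

end ToothIndex

open ToothIndex in
lemma exists_combMap_realizesWords :
    ∃ C : CombMap ToothIndex, ∀ m ≥ 2, C.RealizesWords m := by
  obtain ⟨pos, hinj, hpos⟩ := exists_injective_mem_Ioo (u := approxPos)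
    (v := fun i => approxPos i + height i) fun i => lt_add_of_pos_right _ i.height_pos
  refine ⟨{
    pos := pos
    height := height
    shift := next
    pos_injective := hinj
    pos_mem := fun i => ?_
    height_pos := height_pos
    height_le_one := height_le_one
    finite_le_height := finite_le_height
    height_shift := fun _ => rfl
    abs_pos_shift_sub_le := fun i => ?_
    mem_periodicPts_shift := mem_periodicPts_next }, fun m hm w => ⟨⟨m, w, 0⟩, fun j => ?_⟩⟩
  · have hprofile := profile_mem_Icc i.2.1 i.2.2.val
    exact ⟨hprofile.1.trans (hpos i).1.le,
      (hpos i).2.le.trans ((add_le_add hprofile.2 i.height_le_one).trans_eq one_add_one_eq_two)⟩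
  · have hstep := abs_le.1 (abs_approxPos_next_sub_le i)
    have hheight : height i.next = height i := rfl
    have hi := hpos i
    have hnext := hpos i.next
    rw [hheight] at hnext
    exact abs_le.2 ⟨by linarith [hstep.1, hi.2, hnext.1], by linarith [hstep.2, hi.1, hnext.2]⟩
  · obtain ⟨hlow, hhigh⟩ := hpos (next^[2 ^ (m + j : ℕ)] ⟨m, w, 0⟩)
    rw [approxPos_next_iterate_two_pow] at hlow hhigh
    cases hj : w j
    · rw [profile_eq_one w hj] at hlow
      simpa using (by norm_num : (2 / 3 : ℝ) ≤ 1).trans hlow.le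
    · have hheight : height (next^[2 ^ (m + j : ℕ)] ⟨m, w, 0⟩) ≤ 1 / 3 := by
        have hm' : (2 : ℝ) ≤ m := by exact_mod_cast hm
        rw [next_iterate]
        exact one_div_le_one_div_of_le (by norm_num) (by linarith)
      rw [profile_eq_zero_of_true w hj, zero_add] at hhigh
      simpa using hhigh.le.trans hheight

/-- There is a dendrite map with zero topological entropy, every point
periodic or eventually periodic, `Ω(f) = P(f)`, positive supremum of sequence entropies on
`Ω(f)` (hence on the whole space), and without Li–Yorke pairs (hence not Li–Yorke chaotic). -/
theorem exists_dendrite_counterexample :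
    ∃ (D : Set (ℝ × ℝ)) (f : D → D), IsDendrite D ∧ Continuous f ∧
      topEntropy f = 0 ∧
      (∀ x : D, ∃ k : ℕ, f^[k] x ∈ Function.periodicPts f) ∧
      nonWanderingSet f = Function.periodicPts f ∧
      0 < supSeqEntropyOn f (nonWanderingSet f) ∧
      0 < supSeqEntropy f ∧
      (∀ x y : D, ¬ LiYorkePair f x y) ∧
      ¬ ∃ S : Set D, ¬ S.Countable ∧ ∀ x ∈ S, ∀ y ∈ S, x ≠ y → LiYorkePair f x y := by
  obtain ⟨C, hC⟩ := exists_combMap_realizesWords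
  have hwords : ∃ᶠ m in atTop, C.RealizesWords m := (eventually_atTop.2 ⟨2, hC⟩).frequently
  have hpreperiodic := C.exists_iterate_map_mem_periodicPts
  have hΩ := C.nonWanderingSet_map
  have hnotLiYorke (x y : C.space) : ¬ LiYorkePair C.map x y := by
    obtain ⟨k, hk⟩ := hpreperiodic x
    obtain ⟨l, hl⟩ := hpreperiodic y
    exact not_liYorkePair_of_iterate_mem_periodicPts hk hl
  refine ⟨C.space, C.map, C.isDendrite_space, C.continuous_map, C.topEntropy_map, hpreperiodic,
    hΩ, C.supSeqEntropyOn_map_pos (fun i => hΩ ▸ C.tip_mem_periodicPts i) hwords,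
    C.supSeqEntropyOn_map_pos (fun i => mem_univ (C.tip i)) hwords, hnotLiYorke, ?_⟩
  rintro ⟨S, hS, hchaotic⟩
  obtain ⟨x, hx, y, hy, hxy⟩ := not_subsingleton_iff.1 fun h => hS h.countable
  exact hnotLiYorke x y (hchaotic x hx y hy hxy)
end

section
/- Let (X,f) be a dynamical system on a compact metric space. Then h_∞(f) > 0 if and only if there exists an IN-pair (x,y) of (X,f) with x ≠ y, i.e. IN(X,f) \ Δ_X ≠ ∅, where Δ_X = {(x,x) : x ∈ X}. -/
open Set Filter Topology Function
open scoped ENNReal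

/-!
If disjoint closed neighbourhoods of `x` and `y` have arbitrarily large finite independence
sets, concatenate sparser and sparser such sets, each at least as large as everything before it.
Along the resulting sequence, infinitely often at least half of the first `n` times form an
independence set, and then the cover by the complements of the two neighbourhoods
has no subcover with fewer than `2 ^ (n / 2)` elements.

Conversely, if there are no off-diagonal IN-pairs, compactness covers the complement of any open
neighbourhood of the diagonal by finitely many products `U ×ˢ V`, with `U` and `V` disjoint, whose
independence sets have bounded size. A Sauer–Shelah argument for pairs of disjoint sets then shows
that every set separated along the first `n` times of any sequence has at most `exp O((log n)²)`
points, which is subexponential in `n`.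
-/

/-! ### Shattering by pairs of sets -/

section Shattering

variable {P ι : Type*} {A B : ι → Set P} {E F : Finset P} {S : Finset ι}

/-- `E` shatters the index set `S` with respect to the pairs `(A i, B i)`: every way of choosing one
set from each pair indexed by `S` is realized by a point of `E`. -/
def PairShatters (A B : ι → Set P) (E : Finset P) (S : Finset ι) : Prop :=
  ∀ σ : ι → Bool, ∃ p ∈ E, ∀ i ∈ S, p ∈ if σ i then A i else B i

open Classical in
/-- The family of index sets shattered by `E`, the analogue of `Finset.shatterer` for pairs. -/
noncomputable def pairShatterer [Fintype ι] (A B : ι → Set P) (E : Finset P) :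
    Finset (Finset ι) :=
  {S | PairShatters A B E S}

lemma mem_pairShatterer [Fintype ι] : S ∈ pairShatterer A B E ↔ PairShatters A B E S := by
  simp only [pairShatterer, Finset.mem_filter_univ]

lemma PairShatters.mono (h : PairShatters A B E S) (hEF : E ⊆ F) : PairShatters A B F S :=
  fun σ => (h σ).imp fun _ hp => ⟨hEF hp.1, hp.2⟩

lemma pairShatters_empty (hE : E.Nonempty) : PairShatters A B E ∅ := fun _ =>
  hE.imp fun _ hp => ⟨hp, fun _ hi => absurd hi (Finset.notMem_empty _)⟩

lemma PairShatters.exists_mem_left (h : PairShatters A B E S) {i : ι} (hi : i ∈ S) :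
    ∃ p ∈ E, p ∈ A i :=
  (h fun _ => true).imp fun _ hp => ⟨hp.1, by simpa using hp.2 i hi⟩

lemma PairShatters.exists_mem_right (h : PairShatters A B E S) {i : ι} (hi : i ∈ S) :
    ∃ p ∈ E, p ∈ B i :=
  (h fun _ => false).imp fun _ hp => ⟨hp.1, by simpa using hp.2 i hi⟩

open Classical in
lemma PairShatters.insert {i : ι} (hA : PairShatters A B (E.filter (· ∈ A i)) S)
    (hB : PairShatters A B (E.filter (· ∈ B i)) S) : PairShatters A B E (insert i S) := by
  intro σ
  cases hσ : σ i
  · obtain ⟨p, hp, hpS⟩ := hB σ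
    rw [Finset.mem_filter] at hp
    exact ⟨p, hp.1, Finset.forall_mem_insert _ _ _ |>.2 ⟨by simpa [hσ] using hp.2, hpS⟩⟩
  · obtain ⟨p, hp, hpS⟩ := hA σ
    rw [Finset.mem_filter] at hp
    exact ⟨p, hp.1, Finset.forall_mem_insert _ _ _ |>.2 ⟨by simpa [hσ] using hp.2, hpS⟩⟩

variable [Fintype ι]

open Classical in
lemma card_pairShatterer_filter_add_card_le {i : ι} (hi : Disjoint (A i) (B i)) :
    (pairShatterer A B (E.filter (· ∈ A i))).card + (pairShatterer A B (E.filter (· ∈ B i))).card ≤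
      (pairShatterer A B E).card := by
  set 𝒜 := pairShatterer A B (E.filter (· ∈ A i))
  set ℬ := pairShatterer A B (E.filter (· ∈ B i))
  have notMem_of_mem_left : ∀ S ∈ 𝒜, i ∉ S := fun S hS hiS => by
    obtain ⟨p, hp, hpB⟩ := (mem_pairShatterer.1 hS).exists_mem_right hiS
    exact hi.notMem_of_mem_left (Finset.mem_filter.1 hp).2 hpB
  have notMem_of_mem_right : ∀ S ∈ ℬ, i ∉ S := fun S hS hiS => by
    obtain ⟨p, hp, hpA⟩ := (mem_pairShatterer.1 hS).exists_mem_left hiS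
    exact hi.notMem_of_mem_left hpA (Finset.mem_filter.1 hp).2
  have union_subset : 𝒜 ∪ ℬ ⊆ (pairShatterer A B E).nonMemberSubfamily i := fun S hS => by
    rw [Finset.mem_nonMemberSubfamily, mem_pairShatterer]
    rcases Finset.mem_union.1 hS with hS | hS
    · exact ⟨(mem_pairShatterer.1 hS).mono (Finset.filter_subset _ _), notMem_of_mem_left S hS⟩
    · exact ⟨(mem_pairShatterer.1 hS).mono (Finset.filter_subset _ _), notMem_of_mem_right S hS⟩
  have inter_subset : 𝒜 ∩ ℬ ⊆ (pairShatterer A B E).memberSubfamily i := fun S hS => by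
    rw [Finset.mem_inter] at hS
    rw [Finset.mem_memberSubfamily, mem_pairShatterer]
    exact ⟨(mem_pairShatterer.1 hS.1).insert (mem_pairShatterer.1 hS.2),
      notMem_of_mem_left S hS.1⟩
  calc 𝒜.card + ℬ.card = (𝒜 ∩ ℬ).card + (𝒜 ∪ ℬ).card :=
        (Finset.card_inter_add_card_union 𝒜 ℬ).symm
    _ ≤ _ := Nat.add_le_add (Finset.card_le_card inter_subset) (Finset.card_le_card union_subset)
    _ = (pairShatterer A B E).card :=
        Finset.card_memberSubfamily_add_card_nonMemberSubfamily i _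

open Classical in
lemma exists_card_le_mul_card_filter (hE : E.Nontrivial)
    (hsep : (E : Set P).Pairwise fun p q => ∃ i, p ∈ A i ∧ q ∈ B i) :
    ∃ i, E.card ≤ 2 * Fintype.card ι * (E.filter (· ∈ A i)).card ∧
      E.card ≤ 2 * Fintype.card ι * (E.filter (· ∈ B i)).card := by
  have two_le : 2 ≤ E.card := Finset.one_lt_card_iff_nontrivial.2 hE
  obtain ⟨p, hp, q, hq, hpq⟩ := hE
  have : Nonempty ι := (hsep hp hq hpq).nonempty
  have offDiag_subset : E.offDiag ⊆
      Finset.univ.biUnion fun i => E.filter (· ∈ A i) ×ˢ E.filter (· ∈ B i) := by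
    rintro ⟨p, q⟩ hpq
    rw [Finset.mem_offDiag] at hpq
    obtain ⟨i, hpA, hqB⟩ := hsep hpq.1 hpq.2.1 hpq.2.2
    simp only [Finset.mem_biUnion, Finset.mem_univ, true_and, Finset.mem_product,
      Finset.mem_filter]
    exact ⟨i, ⟨hpq.1, hpA⟩, hpq.2.1, hqB⟩
  have offDiag_card_le : E.card * E.card - E.card ≤
      ∑ i, (E.filter (· ∈ A i)).card * (E.filter (· ∈ B i)).card := by
    simpa only [Finset.offDiag_card, Finset.card_product] using
      (Finset.card_le_card offDiag_subset).trans Finset.card_biUnion_le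
  have sq_le : E.card * E.card ≤
      2 * ∑ i, (E.filter (· ∈ A i)).card * (E.filter (· ∈ B i)).card := by
    have := Nat.mul_le_mul_right E.card two_le
    omega
  obtain ⟨i, -, hi⟩ : ∃ i ∈ (Finset.univ : Finset ι), E.card * E.card ≤
      2 * Fintype.card ι * ((E.filter (· ∈ A i)).card * (E.filter (· ∈ B i)).card) := by
    refine Finset.exists_le_of_sum_le Finset.univ_nonempty ?_
    rw [Finset.sum_const, Finset.card_univ, smul_eq_mul, ← Finset.mul_sum, mul_comm 2, mul_assoc]
    exact Nat.mul_le_mul_left _ sq_le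
  refine ⟨i, Nat.le_of_mul_le_mul_right (hi.trans ?_) (by omega : 0 < E.card),
    Nat.le_of_mul_le_mul_right (hi.trans ?_) (by omega : 0 < E.card)⟩
  · rw [← mul_assoc]
    exact Nat.mul_le_mul_left _ (Finset.card_filter_le _ _)
  · rw [mul_comm (E.filter (· ∈ A i)).card, ← mul_assoc]
    exact Nat.mul_le_mul_left _ (Finset.card_filter_le _ _)

-- Each level of the induction replaces `E` by two subsets of proportion at least
-- `1 / (2 * Fintype.card ι)`, whose shatterers have sizes adding up to at most that of `E`.
lemma two_pow_le_card_pairShatterer (hAB : ∀ i, Disjoint (A i) (B i)) {k : ℕ}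
    (hk : (2 * (Fintype.card ι + 1)) ^ k ≤ E.card)
    (hsep : (E : Set P).Pairwise fun p q => ∃ i, p ∈ A i ∧ q ∈ B i) :
    2 ^ k ≤ (pairShatterer A B E).card := by
  classical
  induction k generalizing E with
  | zero =>
    exact Finset.card_pos.2 ⟨∅, mem_pairShatterer.2 (pairShatters_empty (Finset.card_pos.1 hk))⟩
  | succ k ih =>
    have hE : E.Nontrivial := Finset.one_lt_card_iff_nontrivial.1 <|
      (Nat.one_lt_pow k.succ_ne_zero (by omega)).trans_le hk
    obtain ⟨i, hiA, hiB⟩ := exists_card_le_mul_card_filter hE hsep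
    have ih_of_subset : ∀ F ⊆ E, E.card ≤ 2 * Fintype.card ι * F.card →
        2 ^ k ≤ (pairShatterer A B F).card := fun F hFE hF => by
      refine ih ?_ (hsep.mono (Finset.coe_subset.2 hFE))
      refine Nat.le_of_mul_le_mul_left (c := 2 * (Fintype.card ι + 1)) ?_ (by positivity)
      calc _ = (2 * (Fintype.card ι + 1)) ^ (k + 1) := (pow_succ' _ _).symm
        _ ≤ 2 * Fintype.card ι * F.card := hk.trans hF
        _ ≤ 2 * (Fintype.card ι + 1) * F.card := by gcongr; omega
    calc 2 ^ (k + 1) = 2 ^ k + 2 ^ k := by rw [pow_succ, mul_two]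
      _ ≤ _ := Nat.add_le_add (ih_of_subset _ (Finset.filter_subset _ _) hiA)
          (ih_of_subset _ (Finset.filter_subset _ _) hiB)
      _ ≤ (pairShatterer A B E).card := card_pairShatterer_filter_add_card_le (hAB i)

lemma card_le_pow_of_forall_card_le {𝒮 : Finset (Finset ι)} {D : ℕ} (h𝒮 : ∀ S ∈ 𝒮, S.card ≤ D) :
    𝒮.card ≤ (Fintype.card ι + 1) ^ D := by
  classical
  have hsub : 𝒮 ⊆ (Finset.range (D + 1)).biUnion fun k => Finset.powersetCard k Finset.univ :=
    fun S hS => Finset.mem_biUnion.2 ⟨S.card, Finset.mem_range_succ_iff.2 (h𝒮 S hS),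
      Finset.mem_powersetCard_univ.2 rfl⟩
  calc 𝒮.card ≤ ∑ k ∈ Finset.range (D + 1), (Fintype.card ι).choose k := by
        simpa only [Finset.card_powersetCard, Finset.card_univ] using
          (Finset.card_le_card hsub).trans Finset.card_biUnion_le
    _ ≤ ∑ k ∈ Finset.range (D + 1), Fintype.card ι ^ k * 1 ^ (D - k) * D.choose k := by
        refine Finset.sum_le_sum fun k hk => (Nat.choose_le_pow _ _).trans ?_
        rw [one_pow, mul_one]
        exact Nat.le_mul_of_pos_right _ (Nat.choose_pos (Finset.mem_range_succ_iff.1 hk))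
    _ = (Fintype.card ι + 1) ^ D := (add_pow _ _ _).symm

lemma card_lt_two_pow_of_pairShatters_card_le (hAB : ∀ i, Disjoint (A i) (B i))
    (hsep : (E : Set P).Pairwise fun p q => ∃ i, p ∈ A i ∧ q ∈ B i) {D ℓ : ℕ}
    (hD : ∀ S, PairShatters A B E S → S.card ≤ D) (hℓ : Fintype.card ι < 2 ^ ℓ) :
    E.card < 2 ^ ((ℓ + 1) * (ℓ * D + 1)) := by
  by_contra! hE
  have hlower : 2 ^ (ℓ * D + 1) ≤ (pairShatterer A B E).card := by
    refine two_pow_le_card_pairShatterer hAB (le_trans ?_ hE) hsep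
    rw [pow_mul, pow_succ' 2 ℓ]
    gcongr
    exact hℓ
  have hupper : (pairShatterer A B E).card ≤ 2 ^ (ℓ * D) :=
    calc _ ≤ (Fintype.card ι + 1) ^ D :=
          card_le_pow_of_forall_card_le fun S hS => hD S (mem_pairShatterer.1 hS)
      _ ≤ 2 ^ (ℓ * D) := by rw [pow_mul]; gcongr; exact hℓ
  exact (hlower.trans hupper).not_gt (Nat.pow_lt_pow_succ one_lt_two)

end Shattering

/-! ### Independence sets -/

section Independence

variable {X : Type*} {f : X → X} {U V U' V' : Set X}

lemma IsIndepSetPair.subset {I I' : Finset ℕ} (h : IsIndepSetPair f U V I) (hI : I' ⊆ I) :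
    IsIndepSetPair f U V I' :=
  fun J hJ => h J (hJ.trans hI)

lemma IsIndepSetPair.mono {I : Finset ℕ} (h : IsIndepSetPair f U V I) (hU : U ⊆ U')
    (hV : V ⊆ V') : IsIndepSetPair f U' V' I :=
  fun J hJ hJne s => (h J hJ hJne s).mono <| iInter₂_mono fun j _ => preimage_mono <| by
    split_ifs
    exacts [hU, hV]

lemma IsIndepSetPair.exists_forall_mem {I : Finset ℕ} (h : IsIndepSetPair f U V I)
    (hI : I.Nonempty) (s : ℕ → Bool) : ∃ x, ∀ j ∈ I, f^[j] x ∈ if s j then U else V :=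
  (h I subset_rfl hI s).imp fun _ => mem_iInter₂.1

lemma PairShatters.isIndepSetPair {ι : Type*} {A B : ι → Set X} {E : Finset X} {S : Finset ι}
    (h : PairShatters A B E S) {t : ι → ℕ} (hA : ∀ i ∈ S, A i ⊆ f^[t i] ⁻¹' U)
    (hB : ∀ i ∈ S, B i ⊆ f^[t i] ⁻¹' V) : IsIndepSetPair f U V (S.image t) := by
  intro J hJ _ s
  obtain ⟨p, -, hp⟩ := h fun i => s (t i)
  refine ⟨p, mem_iInter₂.2 fun j hj => ?_⟩
  obtain ⟨i, hi, rfl⟩ := Finset.mem_image.1 (hJ hj)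
  have hpi := hp i hi
  rw [mem_preimage]
  split_ifs at hpi ⊢
  exacts [hA i hi hpi, hB i hi hpi]

variable [TopologicalSpace X]

lemma exists_nhds_disjoint_card_le_of_not_INPair [T2Space X] {x y : X} (hne : x ≠ y)
    (h : ¬ INPair f x y) : ∃ U ∈ 𝓝 x, ∃ V ∈ 𝓝 y, Disjoint U V ∧
      ∃ m, ∀ I, IsIndepSetPair f U V I → I.card ≤ m := by
  simp only [INPair] at h
  push Not at h
  obtain ⟨U₁, hU₁, V₁, hV₁, m, hm⟩ := h
  obtain ⟨U₂, V₂, hU₂, hV₂, hdisj⟩ := t2_separation_nhds hne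
  refine ⟨U₁ ∩ U₂, inter_mem hU₁ hU₂, V₁ ∩ V₂, inter_mem hV₁ hV₂,
    hdisj.mono inter_subset_right inter_subset_right, m, fun I hI => ?_⟩
  by_contra! hlt
  exact hm I hlt.le (hI.mono inter_subset_left inter_subset_left)

lemma exists_finset_cover_disjoint_card_le [T2Space X] {K : Set (X × X)} (hK : IsCompact K)
    (hne : ∀ z ∈ K, z.1 ≠ z.2) (hnot : ∀ z ∈ K, ¬ INPair f z.1 z.2) :
    ∃ (𝒬 : Finset (Set X × Set X)) (m : ℕ),
      (∀ p ∈ 𝒬, Disjoint p.1 p.2 ∧ ∀ I, IsIndepSetPair f p.1 p.2 I → I.card ≤ m) ∧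
      ∀ z ∈ K, ∃ p ∈ 𝒬, z ∈ p.1 ×ˢ p.2 := by
  classical
  choose! U hU V hV hUV m hm using fun z (hz : z ∈ K) =>
    exists_nhds_disjoint_card_le_of_not_INPair (hne z hz) (hnot z hz)
  obtain ⟨T, hTK, hT⟩ := hK.elim_nhds_subcover (fun z => U z ×ˢ V z) fun z hz =>
    prod_mem_nhds (hU z hz) (hV z hz)
  refine ⟨T.image fun z => (U z, V z), T.sup m, ?_, fun z hz => ?_⟩
  · refine Finset.forall_mem_image.2 fun z hz => ⟨hUV z (hTK z hz), fun I hI => ?_⟩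
    exact (hm z (hTK z hz) I hI).trans (Finset.le_sup hz)
  · obtain ⟨w, hw, hzw⟩ := mem_iUnion₂.1 (hT hz)
    exact ⟨_, Finset.mem_image_of_mem _ hw, hzw⟩

end Independence

/-! ### Separated sets along a sequence of times -/

section Separation

variable {X : Type*}

/-- The relation of being `W`-close at the times `a 0, …, a (n - 1)`, the analogue of
`Dynamics.dynEntourage` for a sequence of times. -/
def seqDynEntourage (f : X → X) (a : ℕ → ℕ) (W : SetRel X X) (n : ℕ) : SetRel X X :=
  {p | ∀ i < n, (f^[a i] p.1, f^[a i] p.2) ∈ W}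

variable {f : X → X} {a : ℕ → ℕ} {W : SetRel X X} {n : ℕ}

instance [W.IsRefl] : (seqDynEntourage f a W n).IsRefl := ⟨fun _ _ _ => W.rfl⟩

instance [W.IsSymm] : (seqDynEntourage f a W n).IsSymm := ⟨fun _ _ h i hi => W.symm (h i hi)⟩

lemma exists_isCover_card_le_of_isSeparated (R : SetRel X X) [R.IsRefl] [R.IsSymm] {N : ℕ}
    (hN : ∀ E : Finset X, R.IsSeparated (E : Set X) → E.card ≤ N) :
    ∃ E : Finset X, E.card ≤ N ∧ R.IsCover univ (E : Set X) := by
  classical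
  obtain ⟨E, hE, hmax⟩ := Set.Finite.exists_maximalFor' Finset.card
    {E : Finset X | R.IsSeparated (E : Set X)}
    ((finite_Iic N).subset (image_subset_iff.2 hN)) ⟨∅, by simp⟩
  refine ⟨E, hN E hE, fun x _ => ?_⟩
  by_contra! hx
  have hxE : x ∉ E := fun h => hx x h R.rfl
  have hinsert : R.IsSeparated ((insert x E : Finset X) : Set X) := by
    rw [Finset.coe_insert]
    exact hE.insert fun y hy hxy => (hx y hy hxy).elim
  have := hmax hinsert
  simp [hxE] at this

lemma seqCoverCountOn_le_card_of_isCover [W.IsSymm] {𝒰 : Finset (Set X)}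
    (hW : ∀ x, ∃ U ∈ 𝒰, UniformSpace.ball x W ⊆ U) {Y : Set X} {E : Finset X}
    (hE : (seqDynEntourage f a W n).IsCover Y (E : Set X)) :
    seqCoverCountOn f Y a 𝒰 n ≤ E.card := by
  choose U hU𝒰 hU using hW
  refine Nat.sInf_le ⟨fun j i => U (f^[a i] (E.equivFin.symm j)), fun _ _ => hU𝒰 _, fun x hx => ?_⟩
  obtain ⟨p, hpE, hp⟩ := hE hx
  refine mem_iUnion.2 ⟨E.equivFin ⟨p, hpE⟩, mem_iInter.2 fun i => ?_⟩
  simp only [mem_preimage, Equiv.symm_apply_apply]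
  exact hU _ (W.symm (hp i i.2))

lemma exists_isOpen_setRel_ball_subset [TopologicalSpace X] [CompactSpace X] [R1Space X]
    {𝒰 : Finset (Set X)} (h𝒰 : IsOpenCoverOn univ 𝒰) :
    ∃ W : SetRel X X, IsOpen W ∧ W.IsRefl ∧ W.IsSymm ∧
      ∀ x, ∃ U ∈ 𝒰, UniformSpace.ball x W ⊆ U := by
  let _ : UniformSpace X := uniformSpaceOfCompactR1
  obtain ⟨V, hV, hV𝒰⟩ := lebesgue_number_lemma_sUnion isCompact_univ h𝒰.1 h𝒰.2
  obtain ⟨W, ⟨hW, hWo, hWs⟩, hWV⟩ := uniformity_hasBasis_open_symmetric.mem_iff.1 hV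
  refine ⟨W, hWo, ⟨fun x => refl_mem_uniformity hW⟩, hWs, fun x => ?_⟩
  obtain ⟨U, hU, hVU⟩ := hV𝒰 x (mem_univ x)
  exact ⟨U, hU, (UniformSpace.ball_mono hWV x).trans hVU⟩

lemma card_le_of_pairShatters_preimage {𝒬 : Finset (Set X × Set X)} {m : ℕ}
    (h𝒬 : ∀ p ∈ 𝒬, ∀ I, IsIndepSetPair f p.1 p.2 I → I.card ≤ m) (ha : Injective a)
    {E : Finset X} {S : Finset (Fin n × 𝒬)}
    (hS : PairShatters (fun w : Fin n × 𝒬 => f^[a w.1] ⁻¹' w.2.1.1)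
      (fun w => f^[a w.1] ⁻¹' w.2.1.2) E S) : S.card ≤ m * 𝒬.card := by
  classical
  rw [← Fintype.card_coe 𝒬, ← Finset.card_univ]
  refine Finset.card_le_mul_card_image_of_maps_to (f := Prod.snd) (by simp) m fun p _ => ?_
  set Sp := S.filter (·.2 = p)
  have hSp : PairShatters _ _ E Sp := fun σ => (hS σ).imp fun _ h =>
    ⟨h.1, fun w hw => h.2 w (Finset.mem_filter.1 hw).1⟩
  have hinj : Set.InjOn (fun w : Fin n × 𝒬 => a w.1) Sp := fun w hw w' hw' h =>
    Prod.ext (Fin.ext (ha h))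
      ((Finset.mem_filter.1 hw).2.trans (Finset.mem_filter.1 hw').2.symm)
  rw [← Finset.card_image_of_injOn hinj]
  refine h𝒬 p p.2 _ (hSp.isIndepSetPair (fun w hw => ?_) fun w hw => ?_) <;>
  rw [(Finset.mem_filter.1 hw).2]

variable [TopologicalSpace X] [CompactSpace X] [T2Space X]

lemma exists_forall_seqCoverCountOn_le (hf : ∀ x y, INPair f x y → x = y) (ha : Injective a)
    {𝒰 : Finset (Set X)} (h𝒰 : IsOpenCoverOn univ 𝒰) :
    ∃ L D : ℕ, ∀ n ℓ, n * L < 2 ^ ℓ →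
      seqCoverCountOn f univ a 𝒰 n ≤ 2 ^ ((ℓ + 1) * (ℓ * D + 1)) := by
  obtain ⟨W, hWo, _, _, hW⟩ := exists_isOpen_setRel_ball_subset h𝒰
  have hne : ∀ z ∈ Wᶜ, z.1 ≠ z.2 := by
    rintro ⟨x, y⟩ hz (rfl : x = y)
    exact hz W.rfl
  obtain ⟨𝒬, m, h𝒬, hcover⟩ := exists_finset_cover_disjoint_card_le
    hWo.isClosed_compl.isCompact hne fun z hz h => hne z hz (hf _ _ h)
  refine ⟨𝒬.card, m * 𝒬.card, fun n ℓ hℓ => ?_⟩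
  have card_le_of_isSeparated : ∀ E : Finset X,
      (seqDynEntourage f a W n).IsSeparated (E : Set X) →
        E.card ≤ 2 ^ ((ℓ + 1) * (ℓ * (m * 𝒬.card) + 1)) := fun E hE => by
    refine (card_lt_two_pow_of_pairShatters_card_le (fun w : Fin n × 𝒬 =>
      (h𝒬 w.2 w.2.2).1.preimage f^[a w.1]) (hE.mono' fun p q hpq => ?_)
      (fun S => card_le_of_pairShatters_preimage (fun p hp => (h𝒬 p hp).2) ha)
      (by simpa using hℓ)).le
    simp only [seqDynEntourage, mem_ofPred_eq, not_forall] at hpq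
    obtain ⟨i, hi, hW⟩ := hpq
    obtain ⟨P, hP, hPi⟩ := hcover _ hW
    exact ⟨(⟨i, hi⟩, ⟨P, hP⟩), hPi⟩
  obtain ⟨E, hE, hEcover⟩ := exists_isCover_card_le_of_isSeparated _ card_le_of_isSeparated
  exact (seqCoverCountOn_le_card_of_isCover hW hEcover).trans hE

end Separation

/-! ### Vanishing sequence entropy -/

lemma isLittleO_natLog_mul_add_sq (L : ℕ) (c : ℝ) :
    (fun n : ℕ => ((Nat.log 2 (n * L) : ℝ) + c) ^ 2) =o[atTop] fun n : ℕ => (n : ℝ) := by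
  have natLog_isBigO : (fun n : ℕ => (Nat.log 2 (n * L) : ℝ)) =O[atTop]
      fun n : ℕ => Real.log n := by
    refine .of_bound (2 / Real.log 2) ?_
    filter_upwards [eventually_ge_atTop L] with n hn
    rw [Real.norm_natCast, Real.norm_of_nonneg (Real.log_natCast_nonneg n)]
    calc (Nat.log 2 (n * L) : ℝ) ≤ Nat.log 2 (n ^ 2) := by
          rw [sq]
          exact_mod_cast Nat.log_mono_right (Nat.mul_le_mul_left n hn)
      _ ≤ Real.logb 2 (n ^ 2) := by exact_mod_cast Real.natLog_le_logb (n ^ 2) 2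
      _ = 2 / Real.log 2 * Real.log n := by
          rw [Real.logb, Real.log_pow]
          push_cast
          ring
  have const_isBigO : (fun _ : ℕ => c) =O[atTop] fun n : ℕ => Real.log n :=
    ((Asymptotics.isLittleO_const_left.2 (.inr (tendsto_norm_atTop_atTop.comp
      Real.tendsto_log_atTop))).comp_tendsto tendsto_natCast_atTop_atTop).isBigO
  exact ((natLog_isBigO.add const_isBigO).pow 2).trans_isLittleO <|
    Real.isLittleO_pow_log_id_atTop.comp_tendsto tendsto_natCast_atTop_atTop

lemma log_natCast_le_of_le_two_pow {N k : ℕ} (h : N ≤ 2 ^ k) :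
    Real.log N ≤ k * Real.log 2 := by
  rcases N.eq_zero_or_pos with rfl | hN
  · rw [Nat.cast_zero, Real.log_zero]
    positivity
  · rw [← Real.log_pow]
    exact Real.log_le_log (by exact_mod_cast hN) (by exact_mod_cast h)

lemma tendsto_log_div_of_le_two_pow {N : ℕ → ℕ} {L D : ℕ}
    (hN : ∀ n ℓ, n * L < 2 ^ ℓ → N n ≤ 2 ^ ((ℓ + 1) * (ℓ * D + 1))) :
    Tendsto (fun n : ℕ => Real.log (N n) / n) atTop (𝓝 0) := by
  have hbound : ∀ n, Real.log (N n) ≤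
      (D + 1) * Real.log 2 * ((Nat.log 2 (n * L) : ℝ) + 2) ^ 2 := fun n => by
    set k := Nat.log 2 (n * L)
    have hexp : (k + 1 + 1) * ((k + 1) * D + 1) ≤ (D + 1) * (k + 2) ^ 2 := by nlinarith
    have hNn : N n ≤ 2 ^ ((D + 1) * (k + 2) ^ 2) :=
      (hN n (k + 1) (Nat.lt_pow_succ_log_self one_lt_two _)).trans
        (Nat.pow_le_pow_right two_pos hexp)
    refine (log_natCast_le_of_le_two_pow hNn).trans_eq ?_
    push_cast
    ring
  have hlim : Tendsto (fun n : ℕ => (D + 1) * Real.log 2 *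
      (((Nat.log 2 (n * L) : ℝ) + 2) ^ 2 / n)) atTop (𝓝 0) := by
    simpa only [mul_zero] using
      (isLittleO_natLog_mul_add_sq L 2).tendsto_div_nhds_zero.const_mul ((D + 1) * Real.log 2)
  refine squeeze_zero (fun n => div_nonneg (Real.log_natCast_nonneg _) n.cast_nonneg)
    (fun n => ?_) hlim
  rw [← mul_div_assoc]
  gcongr
  exact hbound n

lemma seqEntropyOn_univ_eq_zero {X : Type*} [TopologicalSpace X] [CompactSpace X] [T2Space X]
    {f : X → X} (hf : ∀ x y, INPair f x y → x = y) {a : ℕ → ℕ} (ha : Injective a) :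
    seqEntropyOn f univ a = 0 := by
  simp only [seqEntropyOn, ENNReal.iSup_eq_zero]
  intro 𝒰 h𝒰
  obtain ⟨L, D, hLD⟩ := exists_forall_seqCoverCountOn_le hf ha h𝒰
  simpa only [ENNReal.ofReal_zero] using
    (ENNReal.tendsto_ofReal (tendsto_log_div_of_le_two_pow hLD)).limsup_eq

/-! ### Positive sequence entropy -/

lemma exists_strictMono_blocks {𝓘 : Set (Finset ℕ)} (h𝓘 : IsLowerSet 𝓘)
    (hlarge : ∀ m, ∃ I, m ≤ I.card ∧ I ∈ 𝓘) :
    ∃ (N : ℕ → ℕ) (I : ℕ → Finset ℕ), StrictMono N ∧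
      ∀ k, I k ∈ 𝓘 ∧ N k < (I k).card ∧ (I k : Set ℕ) ⊆ Ioo (N k) (N (k + 1)) := by
  have exists_far : ∀ n, ∃ I ∈ 𝓘, n < I.card ∧ ∀ j ∈ I, n < j := fun n => by
    obtain ⟨I, hcard, hI⟩ := hlarge (2 * (n + 1))
    refine ⟨I \ Finset.range (n + 1), h𝓘 Finset.sdiff_subset hI, ?_, fun j hj => ?_⟩
    · have := Finset.le_card_sdiff (Finset.range (n + 1)) I
      rw [Finset.card_range] at this
      omega
    · simpa using (Finset.mem_sdiff.1 hj).2
  choose I hI hcard hlt using exists_far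
  let N : ℕ → ℕ := fun k => (fun n => (I n).sup id + 1)^[k] 0
  have hIoo : ∀ k, (I (N k) : Set ℕ) ⊆ Ioo (N k) (N (k + 1)) := fun k j hj => by
    refine ⟨hlt _ j hj, ?_⟩
    rw [show N (k + 1) = (I (N k)).sup id + 1 from iterate_succ_apply' _ k 0, Nat.lt_succ_iff]
    exact Finset.le_sup (f := id) (Finset.mem_coe.1 hj)
  have hN : StrictMono N := strictMono_nat_of_lt_succ fun k => by
    obtain ⟨j, hj⟩ := Finset.card_pos.1 (Nat.zero_lt_of_lt (hcard (N k)))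
    exact (hIoo k hj).1.trans (hIoo k hj).2
  exact ⟨N, fun k => I (N k), hN, fun k => ⟨hI _, hcard _, hIoo k⟩⟩

open Classical in
lemma count_iUnion_le_add_card {N : ℕ → ℕ} (hN : Monotone N) {I : ℕ → Finset ℕ}
    (hI : ∀ k, (I k : Set ℕ) ⊆ Ioo (N k) (N (k + 1))) (k : ℕ) :
    Nat.count (· ∈ ⋃ l, (I l : Set ℕ)) (N (k + 1)) ≤ N k + (I k).card := by
  have hsub : (Finset.range (N (k + 1))).filter (· ∈ ⋃ l, (I l : Set ℕ)) ⊆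
      Finset.range (N k) ∪ I k := by
    intro j hj
    rw [Finset.mem_filter, Finset.mem_range] at hj
    obtain ⟨hjN, hj⟩ := hj
    obtain ⟨l, hl⟩ := mem_iUnion.1 hj
    rw [Finset.mem_union, Finset.mem_range]
    have hlk : l < k + 1 := hN.reflect_lt ((hI l hl).1.trans hjN)
    rcases (Nat.lt_succ_iff.1 hlk).eq_or_lt with rfl | hlk
    · exact .inr hl
    · exact .inl ((hI l hl).2.trans_le (hN hlk))
  rw [Nat.count_eq_card_filter_range]
  calc _ ≤ (Finset.range (N k) ∪ I k).card := Finset.card_le_card hsub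
    _ ≤ N k + (I k).card := by
      simpa only [Finset.card_range] using Finset.card_union_le (Finset.range (N k)) (I k)

lemma exists_strictMono_frequently_le_two_mul_card {𝓘 : Set (Finset ℕ)} (h𝓘 : IsLowerSet 𝓘)
    (hlarge : ∀ m, ∃ I, m ≤ I.card ∧ I ∈ 𝓘) :
    ∃ a : ℕ → ℕ, StrictMono a ∧ 1 ≤ a 0 ∧
      ∃ᶠ n in atTop, ∃ I ∈ 𝓘, (I : Set ℕ) ⊆ a '' Iio n ∧ n ≤ 2 * I.card := by
  classical
  obtain ⟨N, I, hN, hI⟩ := exists_strictMono_blocks h𝓘 hlarge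
  choose hI𝓘 hcard hIoo using hI
  set S : Set ℕ := ⋃ k, (I k : Set ℕ)
  have mem_S : ∀ k, ∀ j ∈ I k, j ∈ S := fun k j hj => mem_iUnion.2 ⟨k, hj⟩
  have hS : S.Infinite := infinite_of_forall_exists_gt fun k => by
    obtain ⟨j, hj⟩ := Finset.card_pos.1 (Nat.zero_lt_of_lt (hcard k))
    exact ⟨j, mem_S k j hj, hN.le_apply.trans_lt (hIoo k hj).1⟩
  have one_le_of_mem : ∀ j ∈ S, 1 ≤ j := fun j hj => by
    obtain ⟨k, hk⟩ := mem_iUnion.1 hj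
    exact Nat.one_le_of_lt (hIoo k hk).1
  refine ⟨Nat.nth (· ∈ S), Nat.nth_strictMono hS, one_le_of_mem _ (Nat.nth_mem_of_infinite hS 0),
    frequently_atTop.2 fun k => ?_⟩
  have subset_image : (I k : Set ℕ) ⊆
      Nat.nth (· ∈ S) '' Iio (Nat.count (· ∈ S) (N (k + 1))) := fun j hj =>
    ⟨Nat.count (· ∈ S) j, Nat.count_strict_mono (mem_S k j hj) (hIoo k hj).2,
      Nat.nth_count (mem_S k j hj)⟩
  have card_le_count : (I k).card ≤ Nat.count (· ∈ S) (N (k + 1)) := by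
    rw [Nat.count_eq_card_filter_range]
    exact Finset.card_le_card fun j hj => Finset.mem_filter.2
      ⟨Finset.mem_range.2 (hIoo k hj).2, mem_S k j hj⟩
  refine ⟨_, (hN.le_apply.trans (hcard k).le).trans card_le_count, I k, hI𝓘 k, subset_image, ?_⟩
  have : Nat.count (· ∈ S) (N (k + 1)) ≤ N k + (I k).card :=
    count_iUnion_le_add_card hN.monotone hIoo k
  have := hcard k
  omega

lemma exists_subcover_card_eq_seqCoverCountOn {X : Type*} (f : X → X) {Y : Set X} (a : ℕ → ℕ)
    {𝒰 : Finset (Set X)} (h𝒰 : univ ⊆ ⋃₀ (𝒰 : Set (Set X))) (n : ℕ) :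
    ∃ c : Fin (seqCoverCountOn f Y a 𝒰 n) → Fin n → Set X, (∀ j i, c j i ∈ 𝒰) ∧
      Y ⊆ ⋃ j, ⋂ i : Fin n, f^[a i] ⁻¹' c j i := by
  refine Nat.sInf_mem (s := {m | ∃ c : Fin m → Fin n → Set X, (∀ j i, c j i ∈ 𝒰) ∧
    Y ⊆ ⋃ j, ⋂ i : Fin n, f^[a i] ⁻¹' c j i}) ?_
  let e := Fintype.equivFin (Fin n → 𝒰)
  choose U hU𝒰 hU using fun x => h𝒰 (mem_univ x)
  refine ⟨_, fun j i => e.symm j i, fun j i => (e.symm j i).2, fun x _ => mem_iUnion.2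
    ⟨e fun i => ⟨U (f^[a i] x), hU𝒰 _⟩, mem_iInter.2 fun i => ?_⟩⟩
  simp only [Equiv.symm_apply_apply]
  exact hU _

lemma IsIndepSetPair.two_pow_card_le_seqCoverCountOn {X : Type*} {f : X → X} {A B : Set X}
    {I : Finset ℕ} (h : IsIndepSetPair f A B I) (hI : I.Nonempty) {a : ℕ → ℕ} {n : ℕ}
    (ha : (I : Set ℕ) ⊆ a '' Iio n) {𝒰 : Finset (Set X)} (h𝒰 : univ ⊆ ⋃₀ (𝒰 : Set (Set X)))
    (hsep : ∀ W ∈ 𝒰, Disjoint W A ∨ Disjoint W B) :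
    2 ^ I.card ≤ seqCoverCountOn f univ a 𝒰 n := by
  classical
  obtain ⟨c, hc𝒰, hc⟩ := exists_subcover_card_eq_seqCoverCountOn f (Y := univ) a h𝒰 n
  choose x hx using fun J : Finset ℕ => h.exists_forall_mem hI fun j => decide (j ∈ J)
  choose cell hcell using fun J => mem_iUnion.1 (hc (mem_univ (x J)))
  have mem_iff_of_cell_eq : ∀ J J', cell J = cell J' → ∀ j ∈ I, (j ∈ J → j ∈ J') := by
    intro J J' hJJ' j hj hjJ
    obtain ⟨i, hi, rfl⟩ := ha hj
    by_contra hjJ'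
    have hxA : f^[a i] (x J) ∈ A := by simpa [hjJ] using hx J (a i) hj
    have hxB : f^[a i] (x J') ∈ B := by simpa [hjJ'] using hx J' (a i) hj
    have hW := mem_iInter.1 (hcell J) ⟨i, hi⟩
    have hW' := mem_iInter.1 (hcell J') ⟨i, hi⟩
    rw [← hJJ'] at hW'
    rcases hsep _ (hc𝒰 (cell J) ⟨i, hi⟩) with hdisj | hdisj
    · exact hdisj.notMem_of_mem_left hW hxA
    · exact hdisj.notMem_of_mem_left hW' hxB
  have cell_injOn : InjOn cell (I.powerset : Set (Finset ℕ)) := fun J hJ J' hJ' hJJ' => by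
    rw [Finset.mem_coe, Finset.mem_powerset] at hJ hJ'
    exact Finset.Subset.antisymm (fun j hj => mem_iff_of_cell_eq J J' hJJ' j (hJ hj) hj)
      (fun j hj => mem_iff_of_cell_eq J' J hJJ'.symm j (hJ' hj) hj)
  calc 2 ^ I.card = I.powerset.card := (Finset.card_powerset I).symm
    _ ≤ (Finset.univ : Finset (Fin (seqCoverCountOn f univ a 𝒰 n))).card :=
        Finset.card_le_card_of_injOn cell (fun _ _ => Finset.mem_univ _) cell_injOn
    _ = seqCoverCountOn f univ a 𝒰 n := Finset.card_fin _

lemma log_two_div_two_le_seqEntropyOn {X : Type*} [TopologicalSpace X] {f : X → X} {A B : Set X}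
    (hA : IsClosed A) (hB : IsClosed B) (hAB : Disjoint A B) {a : ℕ → ℕ}
    (h : ∃ᶠ n in atTop, ∃ I, IsIndepSetPair f A B I ∧ (I : Set ℕ) ⊆ a '' Iio n ∧
      n ≤ 2 * I.card) :
    ENNReal.ofReal (Real.log 2 / 2) ≤ seqEntropyOn f univ a := by
  classical
  let 𝒰 : Finset (Set X) := {Aᶜ, Bᶜ}
  have h𝒰 : IsOpenCoverOn univ 𝒰 := by
    refine ⟨by simp [𝒰, hA, hB], ?_⟩
    simp [𝒰, ← compl_inter, hAB.inter_eq]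
  have hsep : ∀ W ∈ 𝒰, Disjoint W A ∨ Disjoint W B := by
    simp [𝒰, disjoint_compl_left]
  refine le_iSup₂_of_le 𝒰 h𝒰 (le_limsup_of_frequently_le ?_)
  refine (h.and_eventually (eventually_gt_atTop 0)).mono ?_
  rintro n ⟨⟨I, hI, haI, hnI⟩, hn⟩
  have hIne : I.Nonempty := Finset.card_pos.1 (by omega)
  have hcount := hI.two_pow_card_le_seqCoverCountOn hIne haI h𝒰.2 hsep
  refine ENNReal.ofReal_le_ofReal ((div_le_div_iff₀ two_pos (by exact_mod_cast hn)).2 ?_)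
  calc Real.log 2 * n ≤ Real.log 2 * (2 * I.card) := by
        gcongr
        exact_mod_cast hnI
    _ = Real.log (2 ^ I.card) * 2 := by rw [Real.log_pow]; ring
    _ ≤ Real.log (seqCoverCountOn f univ a 𝒰 n) * 2 := by
        gcongr
        exact_mod_cast hcount

lemma INPair.supSeqEntropy_pos {X : Type*} [TopologicalSpace X] [T25Space X] {f : X → X} {x y : X}
    (h : INPair f x y) (hne : x ≠ y) : 0 < supSeqEntropy f := by
  obtain ⟨U, hU, V, hV, hUV⟩ := exists_nhds_disjoint_closure hne
  obtain ⟨a, ha, ha0, hfreq⟩ := exists_strictMono_frequently_le_two_mul_card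
    (𝓘 := {I | IsIndepSetPair f (closure U) (closure V) I}) (fun _ _ hsub hI => hI.subset hsub)
    (h _ (mem_of_superset hU subset_closure) _ (mem_of_superset hV subset_closure))
  calc 0 < ENNReal.ofReal (Real.log 2 / 2) :=
        ENNReal.ofReal_pos.2 (half_pos (Real.log_pos one_lt_two))
    _ ≤ seqEntropyOn f univ a :=
        log_two_div_two_le_seqEntropyOn isClosed_closure isClosed_closure hUV hfreq
    _ ≤ supSeqEntropy f := le_iSup_of_le a (le_iSup₂_of_le ha ha0 le_rfl)

theorem supSeqEntropy_pos_iff_INPair_general {X : Type*} [TopologicalSpace X] [CompactSpace X]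
    [T2Space X] (f : X → X) : 0 < supSeqEntropy f ↔ ∃ x y : X, INPair f x y ∧ x ≠ y := by
  refine ⟨fun h => ?_, fun ⟨x, y, hxy, hne⟩ => hxy.supSeqEntropy_pos hne⟩
  contrapose! h
  simp only [supSeqEntropy, supSeqEntropyOn, nonpos_iff_eq_zero, ENNReal.iSup_eq_zero]
  exact fun a ha _ => seqEntropyOn_univ_eq_zero h ha.injective

/-- `h_∞(f) > 0` iff there is an IN-pair off the diagonal. -/
theorem supSeqEntropy_pos_iff_INPair {X : Type*} [MetricSpace X] [CompactSpace X]
    (f : X → X) (hf : Continuous f) :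
    0 < supSeqEntropy f ↔ ∃ x y : X, INPair f x y ∧ x ≠ y :=
  supSeqEntropy_pos_iff_INPair_general f
end
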